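/- Let A be a commutative noetherian ring and let B be a nonzero, flat, formally smooth A-algebra which is essentially of finite type over A, and assume Spec(B) is connected. Then there exist an invertible B-module N̄ and an integer n ≥ 0 such that Ext^i_{B ⊗_A B}(B, N̄ ⊗_A N̄) = 0 for all i ≠ n and Ext^n_{B ⊗_A B}(B, N̄ ⊗_A N̄) ≅ N̄ as B-modules; that is, N̄ is (up to shift) a rigid module over B relative to A. -/

import Mathlib

universe u

open CategoryTheory TensorProduct

/-- An `R`-module `L` is *invertible* if there is an `R`-module `L'` with `L ⊗[R] L' ≅ R`. -/
def Module.IsInvertible (R : Type u) [CommRing R] (L : Type u) [AddCommGroup L] [Module R L] :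
    Prop :=
  ∃ (L' : Type u) (_ : AddCommGroup L') (_ : Module R L'),
    Nonempty ((TensorProduct R L L') ≃ₗ[R] R)

/-- For `B`-modules `M` and `N` (over an `A`-algebra `B`), the module structure on
`M ⊗[A] N` over the enveloping ring `B ⊗[A] B`, where
`(b ⊗ b') • (m ⊗ n) = (b • m) ⊗ (b' • n)`. -/
noncomputable def TensorProduct.envModule (A B : Type u) [CommRing A] [CommRing B] [Algebra A B]
    (N : Type u) [AddCommGroup N] [Module A N] [Module B N] [IsScalarTower A B N] :
    Module (B ⊗[A] B) (N ⊗[A] N) :=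
  Module.compHom _
    ((Module.endTensorEndAlgHom (R := A) (S := A) (A := A) (M := N) (N := N)).comp
      (Algebra.TensorProduct.map
        (Algebra.lsmul A A N : B →ₐ[A] Module.End A N)
        (Algebra.lsmul A A N : B →ₐ[A] Module.End A N))).toRingHom

open MvPolynomial in
theorem rig_X_mul_mem {n : ℕ} {B : Type*} [CommRing B] (i : Fin n) (f : MvPolynomial (Fin n) B)
    (k : ℕ) (h : X i * f ∈ idealOfVars (Fin n) B ^ (k + 1)) : f ∈ idealOfVars (Fin n) B ^ k := by
  rw [mem_pow_idealOfVars_iff] at h ⊢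
  intro m hm
  have h1 := h (m + Finsupp.single i 1) (by
    rw [mem_support_iff, mul_comm, coeff_mul_X]
    exact mem_support_iff.mp hm)
  simpa using h1

open MvPolynomial in
theorem rig_weaklyRegular {n : ℕ} {B S : Type*} [CommRing B] [CommRing S] [Algebra B S]
    [IsNoetherianRing S] [IsLocalRing S] (x : Fin n → S)
    (hK : Ideal.span (Set.range x) ≠ ⊤)
    (inj : ∀ (k : ℕ) (f : MvPolynomial (Fin n) B), aeval x f ∈ Ideal.span (Set.range x) ^ k →
      f ∈ idealOfVars (Fin n) B ^ k)
    (surj : ∀ (k : ℕ) (s : S), ∃ f : MvPolynomial (Fin n) B,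
      s - aeval x f ∈ Ideal.span (Set.range x) ^ k) :
    RingTheory.Sequence.IsWeaklyRegular S (List.ofFn x) := by
  set K := Ideal.span (Set.range x) with hKdef
  rw [RingTheory.Sequence.isWeaklyRegular_iff_Fin]
  intro ⟨i0, hi0⟩
  have hi : i0 < n := by simpa using hi0
  let i : Fin n := ⟨i0, hi⟩
  have hofl : Ideal.ofList (List.take i0 (List.ofFn x)) = Ideal.span (x '' {j | j < i}) := by
    rw [Ideal.ofList]
    congr 1
    ext s
    simp only [Set.mem_ofPred_eq, Set.mem_image, List.mem_take_iff_getElem]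
    constructor
    · rintro ⟨j, hj, rfl⟩
      have : j < i0 ∧ j < n := by simpa using hj
      exact ⟨⟨j, this.2⟩, this.1, by simp⟩
    · rintro ⟨j, hj, rfl⟩
      exact ⟨j.1, by simpa using (show j.1 < i0 from hj), by simp⟩
  have hget : (List.ofFn x)[i0] = x i := by simp [i]
  simp only [Fin.getElem_fin, hget]
  set L := Ideal.span (x '' {j | j < i}) with hL
  have key : ∀ s : S, x i * s ∈ L → s ∈ L := by
    intro s hs
    have hk : ∀ k, s ∈ L ⊔ K ^ k := by
      intro k
      obtain ⟨f, hf⟩ := surj k s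
      obtain ⟨c, hc⟩ : ∃ c : Fin n → S, x i * s = ∑ j, if j < i then c j * x j else 0 := by
        rw [hL, Ideal.span, Submodule.mem_span_image_iff_exists_fun] at hs
        obtain ⟨t, ht, c, hc⟩ := hs
        refine ⟨fun j => if h : j ∈ t then c ⟨j, h⟩ else 0, ?_⟩
        rw [← hc]
        rw [← Finset.sum_subset (Finset.subset_univ t), ← Finset.sum_coe_sort t]
        · refine Finset.sum_congr rfl fun j _ => ?_
          have : j.1 < i := ht j.2
          simp [this]
        · intro j _ hj
          simp [hj]
      choose g hg using fun j => surj k (c j)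
      have hxK : ∀ j, x j ∈ K := fun j => Ideal.subset_span ⟨j, rfl⟩
      have h1 : aeval x (X i * f - ∑ j, if j < i then g j * X j else 0) ∈ K ^ (k+1) := by
        have : aeval x (X i * f - ∑ j, if j < i then g j * X j else 0)
          = (∑ j, if j < i then (c j - aeval x (g j)) * x j else 0) - x i * (s - aeval x f) := by
          rw [mul_sub, hc]
          simp only [map_sub, map_mul, aeval_X, map_sum, apply_ite (aeval x), map_zero]
          rw [show (∑ j, if j < i then (c j - aeval x (g j)) * x j else 0) = (∑ j, if j < i then (c j) * x j else 0) - (∑ j, if j < i then (aeval x (g j)) * x j else 0) by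
            rw [← Finset.sum_sub_distrib]
            refine Finset.sum_congr rfl fun j _ => ?_
            split_ifs <;> ring]
          ring
        rw [this]
        refine Ideal.sub_mem _ (Ideal.sum_mem _ fun j _ => ?_) ?_
        · split_ifs
          · rw [pow_succ]; exact Ideal.mul_mem_mul (hg j) (hxK j)
          · exact Ideal.zero_mem _
        · rw [pow_succ']; exact Ideal.mul_mem_mul (hxK i) hf
      have h2 := inj _ _ h1
      let ε : MvPolynomial (Fin n) B →ₐ[B] MvPolynomial (Fin n) B :=
        aeval (fun j => if j < i then 0 else X j)
      have h3 : X i * ε f ∈ idealOfVars (Fin n) B ^ (k+1) := by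
        have h4 := Ideal.mem_map_of_mem ε h2
        rw [Ideal.map_pow] at h4
        have h5 : ε (X i * f - ∑ j, if j < i then g j * X j else 0) = X i * ε f := by
          have : ∀ j, ε (if j < i then g j * X j else 0) = 0 := by
            intro j
            split_ifs with h
            · simp [ε, h]
            · simp
          rw [map_sub, map_sum, Finset.sum_eq_zero (fun j _ => this j), map_mul]
          simp [ε]
        rw [h5] at h4
        refine Ideal.pow_right_mono ?_ _ h4
        rw [idealOfVars, Ideal.map_span, Ideal.span_le]
        rintro _ ⟨_, ⟨j, rfl⟩, rfl⟩
        simp only [ε, aeval_X]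
        split_ifs
        · exact Ideal.zero_mem _
        · exact Ideal.subset_span ⟨j, rfl⟩
      have h4 := rig_X_mul_mem i _ k h3
      have h5 : aeval x (ε f) ∈ K ^ k := by
        have := Ideal.mem_map_of_mem (aeval (R := B) x) h4
        rw [Ideal.map_pow] at this
        refine Ideal.pow_right_mono ?_ _ this
        rw [idealOfVars, Ideal.map_span, Ideal.span_le]
        rintro _ ⟨_, ⟨j, rfl⟩, rfl⟩
        simpa using hxK j
      have h6 : aeval x f - aeval x (ε f) ∈ L := by
        rw [← Ideal.Quotient.eq]
        have : (Ideal.Quotient.mkₐ B L).comp (aeval x) = ((Ideal.Quotient.mkₐ B L).comp (aeval x)).comp ε := by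
          ext j
          simp only [ε, AlgHom.comp_apply, aeval_X]
          split_ifs with h
          · simp only [map_zero]
            exact Ideal.Quotient.eq_zero_iff_mem.mpr (Ideal.subset_span ⟨j, h, rfl⟩)
          · simp
        exact DFunLike.congr_fun this f
      have : s = (aeval x f - aeval x (ε f)) + ((s - aeval x f) + aeval x (ε f)) := by ring
      rw [this]
      exact Submodule.add_mem_sup h6 (Ideal.add_mem _ hf h5)
    have hb : (⨅ k : ℕ, K ^ k • (⊤ : Submodule S (S ⧸ L))) = ⊥ :=
      Ideal.iInf_pow_smul_eq_bot_of_isLocalRing _ hK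
    have : Submodule.Quotient.mk (p := L) s ∈ (⨅ k : ℕ, K ^ k • (⊤ : Submodule S (S ⧸ L))) := by
      rw [Submodule.mem_iInf]
      intro k
      obtain ⟨a, ha, b, hb, rfl⟩ := Submodule.mem_sup.mp (hk k)
      rw [Submodule.Quotient.mk_add, (Submodule.Quotient.mk_eq_zero L).mpr ha, zero_add]
      have : (Submodule.Quotient.mk b : S ⧸ L) = b • Submodule.Quotient.mk 1 := by
        rw [← Submodule.Quotient.mk_smul, smul_eq_mul, mul_one]
      rw [this]
      exact Submodule.smul_mem_smul hb trivial
    rw [hb, Submodule.mem_bot] at this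
    exact (Submodule.Quotient.mk_eq_zero L).mp this
  rw [isSMulRegular_iff_right_eq_zero_of_smul]
  intro m hm
  obtain ⟨s, rfl⟩ := Submodule.Quotient.mk_surjective _ m
  rw [← Submodule.Quotient.mk_smul, Submodule.Quotient.mk_eq_zero] at hm
  rw [Submodule.Quotient.mk_eq_zero]
  simp only [smul_eq_mul, Ideal.mul_top] at hm ⊢
  rw [hofl] at hm ⊢
  exact key s hm

open MvPolynomial in
theorem rig_map_vars {n : ℕ} {B S : Type*} [CommRing B] [CommRing S] [Algebra B S] (x : Fin n → S) :
    (idealOfVars (Fin n) B).map (aeval (R := B) x) = Ideal.span (Set.range x) := by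
  rw [idealOfVars, Ideal.map_span, ← Set.range_comp]
  congr 2
  ext j; simp

open MvPolynomial in
theorem rig_sub_C_mem {n : ℕ} {B : Type*} [CommRing B] (f : MvPolynomial (Fin n) B) :
    f - C (constantCoeff f) ∈ idealOfVars (Fin n) B := by
  rw [← pow_one (idealOfVars (Fin n) B), mem_pow_idealOfVars_iff']
  intro x hx
  have : x = 0 := by
    rw [← Finsupp.degree_eq_zero_iff]; omega
  subst this
  simp [constantCoeff_eq]

open MvPolynomial in
theorem rig_surj {n : ℕ} {B S : Type*} [CommRing B] [CommRing S] [Algebra B S]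
    (σ : S →ₐ[B] B) (x : Fin n → S) (hker : RingHom.ker σ = Ideal.span (Set.range x)) 
    (k : ℕ) : ∀ (s : S), ∃ f : MvPolynomial (Fin n) B,
      s - aeval x f ∈ Ideal.span (Set.range x) ^ k := by
  set K := Ideal.span (Set.range x) with hK
  have h1 : ∀ s : S, s - algebraMap B S (σ s) ∈ K := by
    intro s
    rw [← hker, RingHom.mem_ker]; simp
  induction k with
  | zero => intro s; exact ⟨0, by simp⟩
  | succ k ih =>
    have h2 : ∀ s ∈ K ^ k, ∃ f : MvPolynomial (Fin n) B, s - aeval x f ∈ K ^ (k+1) := by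
      intro s hs
      rw [hK, ← rig_map_vars (B := B) x, ← Ideal.map_pow] at hs
      refine Submodule.span_induction (p := fun s _ => ∃ f : MvPolynomial (Fin n) B, s - aeval x f ∈ K ^ (k+1)) ?_ ?_ ?_ ?_ hs
      · rintro _ ⟨f, hf, rfl⟩
        exact ⟨f, by simp⟩
      · exact ⟨0, by simp⟩
      · rintro a b _ _ ⟨f, hf⟩ ⟨g, hg⟩
        refine ⟨f + g, ?_⟩
        have := Ideal.add_mem _ hf hg
        convert this using 1
        rw [map_add]; ring
      · rintro a b hb ⟨f, hf⟩
        have hb' : b ∈ K ^ k := by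
          have : b ∈ Ideal.map (aeval (R := B) x) (idealOfVars (Fin n) B ^ k) := hb
          rwa [Ideal.map_pow, rig_map_vars] at this
        refine ⟨C (σ a) * f, ?_⟩
        have : a • b - aeval x (C (σ a) * f) = (a - algebraMap B S (σ a)) * b + algebraMap B S (σ a) * (b - aeval x f) := by
          simp; ring
        rw [this]
        refine Ideal.add_mem _ ?_ (Ideal.mul_mem_left _ _ hf)
        rw [pow_succ']; exact Ideal.mul_mem_mul (h1 a) hb'
    intro s
    obtain ⟨f, hf⟩ := ih s
    obtain ⟨g, hg⟩ := h2 _ hf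
    exact ⟨f + g, by rwa [map_add, ← sub_sub]⟩

open MvPolynomial in
theorem rig_inj2 {n : ℕ} {B S : Type*} [CommRing B] [CommRing S] [Algebra B S]
    (σ : S →ₐ[B] B) (x : Fin n → S) (hker : RingHom.ker σ = Ideal.span (Set.range x))
    (hind : ∀ b : Fin n → B, ∑ i, algebraMap B S (b i) * x i ∈ Ideal.span (Set.range x) ^ 2 → b = 0)
    (f : MvPolynomial (Fin n) B) (hf : aeval x f ∈ Ideal.span (Set.range x) ^ 2) :
    f ∈ idealOfVars (Fin n) B ^ 2 := by
  have hxσ : ∀ i, σ (x i) = 0 := fun i => by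
    rw [← RingHom.mem_ker, hker]; exact Ideal.subset_span ⟨i, rfl⟩
  have h0 : ∀ g : MvPolynomial (Fin n) B, σ (aeval x g) = constantCoeff g := by
    intro g
    have : σ.comp (aeval x) = aeval (fun _ => 0) := by
      ext i; simp [hxσ]
    have h := DFunLike.congr_fun this g
    rw [AlgHom.comp_apply] at h
    rw [h, constantCoeff_eq, aeval_zero', ← constantCoeff_eq]; rfl
  have h1 : f ∈ idealOfVars (Fin n) B := by
    have h2 : aeval x f ∈ RingHom.ker σ := hker ▸ Ideal.pow_le_self two_ne_zero hf
    rw [RingHom.mem_ker, h0] at h2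
    simpa [h2] using rig_sub_C_mem f
  obtain ⟨g, hg⟩ := (Submodule.mem_span_range_iff_exists_fun _).mp h1
  have h3 : ∑ i, C (constantCoeff (g i)) * X i - f ∈ idealOfVars (Fin n) B ^ 2 := by
    rw [← hg, ← Finset.sum_sub_distrib]
    refine Ideal.sum_mem _ fun i _ => ?_
    rw [smul_eq_mul, ← sub_mul, pow_two]
    refine Ideal.mul_mem_mul ?_ (Ideal.subset_span ⟨i, rfl⟩)
    rw [← neg_sub]; exact neg_mem (rig_sub_C_mem _)
  have h4 := hind (fun i => constantCoeff (g i)) (by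
    have := Ideal.mem_map_of_mem (aeval (R := B) x) h3
    rw [Ideal.map_pow, rig_map_vars] at this
    have h5 := Ideal.add_mem _ this hf
    simpa using h5)
  have h5 : ∀ i, constantCoeff (g i) = 0 := fun i => congrFun h4 i
  simpa [h5] using h3

open MvPolynomial in
theorem rig_inj {n : ℕ} {B S : Type*} [CommRing B] [CommRing S] [Algebra B S]
    [Algebra.FormallySmooth B S]
    (σ : S →ₐ[B] B) (x : Fin n → S) (hker : RingHom.ker σ = Ideal.span (Set.range x))
    (hind : ∀ b : Fin n → B, ∑ i, algebraMap B S (b i) * x i ∈ Ideal.span (Set.range x) ^ 2 → b = 0)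
    (k : ℕ) (f : MvPolynomial (Fin n) B) (hf : aeval x f ∈ Ideal.span (Set.range x) ^ k) :
    f ∈ idealOfVars (Fin n) B ^ k := by
  set K := Ideal.span (Set.range x) with hK
  set J := idealOfVars (Fin n) B with hJ
  let N := k + 2
  let Q := MvPolynomial (Fin n) B ⧸ J ^ N
  let π : MvPolynomial (Fin n) B →ₐ[B] Q := Ideal.Quotient.mkₐ B (J ^ N)
  have hπ : Function.Surjective π := Ideal.Quotient.mkₐ_surjective _ _
  let Jb : Ideal Q := J.map π
  have hmem : ∀ m ≤ N, ∀ f, π f ∈ Jb ^ m → f ∈ J ^ m := by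
    intro m hm f hf
    have h1 : f ∈ ((J ^ m).map (Ideal.Quotient.mk (J ^ N))).comap (Ideal.Quotient.mk (J ^ N)) := by
      rw [Ideal.mem_comap, Ideal.map_pow]; exact hf
    rwa [Ideal.comap_map_mk (Ideal.pow_le_pow_right hm)] at h1
  have hmem' : ∀ m, ∀ f ∈ J ^ m, π f ∈ Jb ^ m := by
    intro m f hf
    have := Ideal.mem_map_of_mem π hf
    rwa [Ideal.map_pow] at this
  have hJbN : Jb ^ N = ⊥ := by
    rw [← Ideal.map_pow]
    exact Ideal.map_quotient_self _
  let g : Q →ₐ[B] S ⧸ K ^ 2 := Ideal.Quotient.liftₐ (J ^ N) ((Ideal.Quotient.mkₐ B (K ^ 2)).comp (aeval x)) (by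
    intro a ha
    have := Ideal.mem_map_of_mem (aeval (R := B) x) (Ideal.pow_le_pow_right (show 2 ≤ N by omega) ha)
    rw [Ideal.map_pow, rig_map_vars] at this
    exact Ideal.Quotient.eq_zero_iff_mem.mpr this)
  have hgπ : ∀ f, g (π f) = Ideal.Quotient.mk (K ^ 2) (aeval x f) := fun f => rfl
  have hkerg : ∀ y, g y = 0 → y ∈ Jb ^ 2 := by
    intro y hy
    obtain ⟨f, rfl⟩ := hπ y
    rw [hgπ, Ideal.Quotient.eq_zero_iff_mem] at hy
    exact hmem' _ _ (rig_inj2 σ x hker hind f hy)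
  have hgs : Function.Surjective g := by
    intro y
    obtain ⟨s, rfl⟩ := Ideal.Quotient.mk_surjective y
    obtain ⟨f, hf⟩ := rig_surj σ x hker 2 s
    exact ⟨π f, by rw [hgπ]; exact ((Ideal.Quotient.eq).mpr hf).symm⟩
  have hnil : IsNilpotent (RingHom.ker g) := by
    refine ⟨N, ?_⟩
    rw [Ideal.zero_eq_bot, eq_bot_iff, ← hJbN]
    refine Ideal.pow_right_mono ?_ _
    intro y hy
    exact Ideal.pow_le_self two_ne_zero (hkerg y hy)
  let φ : S →ₐ[B] Q := Algebra.FormallySmooth.liftOfSurjective (Ideal.Quotient.mkₐ B (K ^ 2)) g hgs hnil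
  have hφ : ∀ s, g (φ s) = Ideal.Quotient.mk (K ^ 2) s :=
    fun s => Algebra.FormallySmooth.liftOfSurjective_apply _ g hgs hnil s
  let θ := φ.comp (aeval (R := B) x)
  have hθX : ∀ i, θ (X i) - π (X i) ∈ Jb ^ 2 := by
    intro i
    apply hkerg
    rw [map_sub, hgπ]
    simp [θ, hφ]
  have hθX' : ∀ i, θ (X i) ∈ Jb := by
    intro i
    have h1 : π (X i) ∈ Jb := Ideal.mem_map_of_mem _ (Ideal.subset_span ⟨i, rfl⟩)
    have := Ideal.add_mem _ (Ideal.pow_le_self two_ne_zero (hθX i)) h1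
    simpa using this
  have hJθ : J.map θ ≤ Jb := by
    rw [Ideal.map_le_iff_le_comap]
    refine Ideal.span_le.mpr ?_
    rintro _ ⟨j, rfl⟩
    exact hθX' j
  have hJθ' : ∀ m, ∀ f ∈ J ^ m, θ f ∈ Jb ^ m := by
    intro m f hf
    have := Ideal.mem_map_of_mem θ hf
    rw [Ideal.map_pow] at this
    exact Ideal.pow_right_mono hJθ _ this
  have hC : ∀ m, ∀ f ∈ J ^ m, θ f - π f ∈ Jb ^ (m+1) := by
    intro m
    induction m with
    | zero =>
      intro f _
      have h1 := Ideal.mem_map_of_mem θ (rig_sub_C_mem f)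
      have h2 := Ideal.mem_map_of_mem π (rig_sub_C_mem f)
      have h3 := Ideal.sub_mem _ (hJθ h1) h2
      have h4 : Jb ^ (0 + 1) = Jb := by rw [zero_add]; exact Submodule.pow_one Jb
      rw [h4]
      convert h3 using 1
      have : θ (C (constantCoeff f)) = π (C (constantCoeff f)) := by
        rw [← algebraMap_eq, AlgHom.commutes, AlgHom.commutes]
      rw [map_sub, map_sub, this]; ring
    | succ m ih =>
      intro f hf
      rw [pow_succ'] at hf
      refine Submodule.mul_induction_on (C := fun f => θ f - π f ∈ Jb ^ (m + 1 + 1)) hf ?_ ?_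
      · intro a ha b hb
        have : θ (a * b) - π (a * b) = (θ a - π a) * θ b + π a * (θ b - π b) := by
          rw [map_mul, map_mul]; ring
        rw [this]
        refine Ideal.add_mem _ ?_ ?_
        · have h2 : θ a - π a ∈ Jb ^ 2 := by
            obtain ⟨c, hc⟩ := (Submodule.mem_span_range_iff_exists_fun _).mp ha
            rw [← hc, map_sum, map_sum, ← Finset.sum_sub_distrib]
            refine Ideal.sum_mem _ fun i _ => ?_
            have h1 := Ideal.mem_map_of_mem θ (rig_sub_C_mem (c i))
            have h2 := Ideal.mem_map_of_mem π (rig_sub_C_mem (c i))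
            have h3 := Ideal.sub_mem _ (hJθ h1) h2
            have : θ (C (constantCoeff (c i))) = π (C (constantCoeff (c i))) := by
              rw [← algebraMap_eq, AlgHom.commutes, AlgHom.commutes]
            rw [map_sub, map_sub, this, sub_sub_sub_cancel_right] at h3
            rw [smul_eq_mul, map_mul, map_mul,
              show θ (c i) * θ (X i) - π (c i) * π (X i) = (θ (c i) - π (c i)) * θ (X i) + π (c i) * (θ (X i) - π (X i)) by ring]
            refine Ideal.add_mem _ ?_ (Ideal.mul_mem_left _ _ (hθX i))
            rw [pow_two]; exact Ideal.mul_mem_mul h3 (hθX' i)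
          have := Ideal.mul_mem_mul h2 (hJθ' m b hb)
          rwa [← pow_add, show 2 + m = m + 1 + 1 by ring] at this
        · have h4 : Jb ^ (m + 1 + 1) = Jb * Jb ^ (m + 1) := pow_succ' Jb (m + 1)
          rw [h4]
          exact Ideal.mul_mem_mul (Ideal.mem_map_of_mem _ ha) (ih b hb)
      · intro a b ha hb
        have := Ideal.add_mem _ ha hb
        convert this using 1
        rw [map_add, map_add]; ring
  have hφK : K.map φ ≤ Jb := by
    rw [hK, Ideal.map_span, Ideal.span_le]
    rintro _ ⟨_, ⟨j, rfl⟩, rfl⟩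
    simpa [θ] using hθX' j
  have hθf : θ f ∈ Jb ^ k := by
    have := Ideal.mem_map_of_mem φ hf
    rw [Ideal.map_pow] at this
    exact Ideal.pow_right_mono hφK _ this
  have hfin : ∀ m ≤ k, f ∈ J ^ m := by
    intro m
    induction m with
    | zero => intro _; simp
    | succ m ih =>
      intro hm
      have h1 := hC m f (ih (by omega))
      have h2 := Ideal.sub_mem _ (Ideal.pow_le_pow_right hm hθf) h1
      refine hmem _ (by omega) f ?_
      simpa using h2
  exact hfin k le_rfl

theorem rig_local_regular {n : ℕ} {B S : Type*} [CommRing B] [CommRing S] [Algebra B S]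
    [Nontrivial B] [IsNoetherianRing S] [IsLocalRing S]
    [Algebra.FormallySmooth B S]
    (σ : S →ₐ[B] B) (x : Fin n → S) (hker : RingHom.ker σ = Ideal.span (Set.range x))
    (hind : ∀ b : Fin n → B, ∑ i, algebraMap B S (b i) * x i ∈ Ideal.span (Set.range x) ^ 2 → b = 0) :
    RingTheory.Sequence.IsWeaklyRegular S (List.ofFn x) :=
  rig_weaklyRegular (B := B) x (hker ▸ RingHom.ker_ne_top σ)
    (rig_inj σ x hker hind) (rig_surj σ x hker)

theorem rig_ker_loc {B R : Type*} [CommRing B] [CommRing R] [Algebra B R] (μ : R →ₐ[B] B)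
    (p : Ideal B) [p.IsPrime] (q : Ideal R) [q.IsPrime] (hq : q = p.comap (μ : R →+* B)) :
    RingHom.ker (Localization.localRingHom q p (μ : R →+* B) hq) =
      (RingHom.ker μ).map (algebraMap R (Localization.AtPrime q)) := by
  apply le_antisymm
  · intro y hy
    obtain ⟨r, s, rfl⟩ := IsLocalization.exists_mk'_eq q.primeCompl y
    rw [RingHom.mem_ker, Localization.localRingHom_mk', IsLocalization.mk'_eq_zero_iff] at hy
    obtain ⟨t, ht⟩ := hy
    have htq : algebraMap B R t ∈ q.primeCompl := by
      intro h
      have h2 : algebraMap B R t ∈ q := h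
      rw [hq, Ideal.mem_comap] at h2
      simp only [RingHom.coe_coe, AlgHom.commutes] at h2
      exact t.2 h2
    rw [IsLocalization.mem_map_algebraMap_iff q.primeCompl]
    refine ⟨⟨⟨algebraMap B R t * r, ?_⟩, ⟨_, htq⟩ * s⟩, ?_⟩
    · rw [RingHom.mem_ker, map_mul]
      simpa using ht
    · simp only [Submonoid.coe_mul, map_mul]
      rw [mul_left_comm, IsLocalization.mk'_spec]
  · rw [Ideal.map_le_iff_le_comap]
    intro r hr
    rw [Ideal.mem_comap, RingHom.mem_ker, Localization.localRingHom_to_map]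
    rw [RingHom.mem_ker] at hr
    simp [hr]

theorem rig_P3core {n : ℕ} {B R : Type*} [CommRing B] [CommRing R] [Algebra B R]
    [IsNoetherianRing R] [Algebra.FormallySmooth B R] (μ : R →ₐ[B] B)
    (p : Ideal B) [p.IsPrime] (q : Ideal R) [q.IsPrime] (hq : q = p.comap (μ : R →+* B))
    (x : Fin n → R) (hx : ∀ i, x i ∈ RingHom.ker μ)
    (hS : ∀ y ∈ RingHom.ker μ, ∃ s ∉ p, ∃ c : Fin n → B,
      algebraMap B R s * y - ∑ i, algebraMap B R (c i) * x i ∈ RingHom.ker μ ^ 2)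
    (hI : ∀ c : Fin n → B, ∑ i, algebraMap B R (c i) * x i ∈ RingHom.ker μ ^ 2 →
      ∀ i, ∃ t ∉ p, t * c i = 0) :
    RingTheory.Sequence.IsWeaklyRegular (Localization.AtPrime q) (List.ofFn x) ∧
    (RingHom.ker μ).map (algebraMap R (Localization.AtPrime q)) =
      Ideal.span (Set.range (fun i => algebraMap R (Localization.AtPrime q) (x i))) := by
  have hμs : ∀ b, μ (algebraMap B R b) = b := fun b => by simp
  have hqp : p = q.comap (algebraMap B R) := by
    ext b; rw [hq]; simp
  set I := RingHom.ker μ with hIdef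
  have hIq : I ≤ q := by
    intro y hy
    rw [hq, Ideal.mem_comap]
    have : μ y = 0 := hy
    simp [this]
  have hspan : I.map (algebraMap R (Localization.AtPrime q)) =
      Ideal.span (Set.range (fun i => algebraMap R (Localization.AtPrime q) (x i))) := by
    apply le_antisymm
    · refine Submodule.le_of_le_smul_of_le_jacobson_bot
        (I := I.map (algebraMap R (Localization.AtPrime q))) (IsNoetherian.noetherian _) ?_ ?_
      · rw [IsLocalRing.jacobson_eq_maximalIdeal _ bot_ne_top,
          ← Localization.AtPrime.map_eq_maximalIdeal]
        exact Ideal.map_mono hIq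
      · rw [Ideal.map_le_iff_le_comap]
        intro y hy
        obtain ⟨s, hs, c, hc⟩ := hS y hy
        rw [Ideal.mem_comap]
        have hsu : IsUnit (algebraMap R (Localization.AtPrime q) (algebraMap B R s)) := by
          refine IsLocalization.map_units (M := q.primeCompl) _ ⟨_, ?_⟩
          intro h
          rw [hqp] at hs
          exact hs h
        rw [← Ideal.unit_mul_mem_iff_mem _ hsu, ← map_mul,
          ← sub_add_cancel (algebraMap B R s * y) (∑ i, algebraMap B R (c i) * x i), map_add,
          add_comm]
        refine Submodule.add_mem_sup ?_ ?_
        · rw [map_sum]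
          refine Ideal.sum_mem _ fun i _ => ?_
          rw [map_mul]
          exact Ideal.mul_mem_left _ _ (Ideal.subset_span ⟨i, rfl⟩)
        · rw [smul_eq_mul, ← pow_two, ← Ideal.map_pow]
          exact Ideal.mem_map_of_mem _ hc
    · rw [Ideal.span_le]
      rintro _ ⟨i, rfl⟩
      exact Ideal.mem_map_of_mem _ (hx i)
  refine ⟨?_, hspan⟩
  letI : Algebra (Localization.AtPrime p) (Localization.AtPrime q) :=
    (Localization.localRingHom p q (algebraMap B R) hqp).toAlgebra
  have halg : ∀ b : B, algebraMap (Localization.AtPrime p) (Localization.AtPrime q)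
      (algebraMap B _ b) = algebraMap R _ (algebraMap B R b) := fun b =>
    Localization.localRingHom_to_map p q (algebraMap B R) hqp b
  haveI : IsScalarTower B (Localization.AtPrime p) (Localization.AtPrime q) :=
    IsScalarTower.of_algebraMap_eq fun b => by
      rw [halg, IsScalarTower.algebraMap_apply B R (Localization.AtPrime q)]
  haveI : Algebra.FormallySmooth R (Localization.AtPrime q) :=
    Algebra.FormallySmooth.of_isLocalization q.primeCompl
  haveI : Algebra.FormallySmooth B (Localization.AtPrime q) :=
    Algebra.FormallySmooth.comp B R (Localization.AtPrime q)
  haveI : Algebra.FormallySmooth (Localization.AtPrime p) (Localization.AtPrime q) :=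
    Algebra.FormallySmooth.localization_base p.primeCompl
  haveI : IsNoetherianRing (Localization.AtPrime q) :=
    IsLocalization.isNoetherianRing q.primeCompl _ inferInstance
  let σ : Localization.AtPrime q →ₐ[Localization.AtPrime p] Localization.AtPrime p :=
    { Localization.localRingHom q p (μ : R →+* B) hq with
      commutes' := by
        intro b
        have : (Localization.localRingHom q p (μ : R →+* B) hq).comp
          (Localization.localRingHom p q (algebraMap B R) hqp) = RingHom.id _ := by
          apply IsLocalization.ringHom_ext p.primeCompl
          ext b
          simp
        exact RingHom.congr_fun this b }
  have hker : RingHom.ker σ = I.map (algebraMap R (Localization.AtPrime q)) :=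
    rig_ker_loc μ p q hq
  have key := rig_local_regular σ (fun i => algebraMap R (Localization.AtPrime q) (x i))
    (by rw [hker, hspan]) (by
      intro b hb
      rw [← hspan, ← Ideal.map_pow] at hb
      obtain ⟨s, hs⟩ := IsLocalization.exist_integer_multiples_of_finite p.primeCompl b
      choose c hc using hs
      have h1 : algebraMap R (Localization.AtPrime q) (∑ i, algebraMap B R (c i) * x i) ∈
          (I ^ 2).map (algebraMap R (Localization.AtPrime q)) := by
        have := Ideal.mul_mem_left _ (algebraMap _ (Localization.AtPrime q)
          (algebraMap B (Localization.AtPrime p) s)) hb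
        convert this using 1
        rw [map_sum, Finset.mul_sum]
        refine Finset.sum_congr rfl fun i _ => ?_
        rw [map_mul, ← halg, hc, ← mul_assoc, ← map_mul, Algebra.smul_def]
      rw [IsLocalization.algebraMap_mem_map_algebraMap_iff q.primeCompl] at h1
      obtain ⟨t, ht, h2⟩ := h1
      have htp : μ t ∉ p := by
        intro h
        apply ht
        show t ∈ q
        rw [hq]
        exact h
      have h3 : ∑ i, algebraMap B R (μ t * c i) * x i ∈ I ^ 2 := by
        have h4 : ∑ i, (t - algebraMap B R (μ t)) * (algebraMap B R (c i) * x i) ∈ I ^ 2 := by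
          refine Ideal.sum_mem _ fun i _ => ?_
          rw [pow_two]
          refine Ideal.mul_mem_mul ?_ (Ideal.mul_mem_left _ _ (hx i))
          rw [hIdef, RingHom.mem_ker, map_sub, hμs, sub_self]
        have h5 := Ideal.sub_mem _ h2 h4
        convert h5 using 1
        rw [Finset.mul_sum, ← Finset.sum_sub_distrib]
        refine Finset.sum_congr rfl fun i _ => ?_
        rw [map_mul]
        ring
      funext i
      obtain ⟨t', ht', h6⟩ := hI _ h3 i
      have hu : IsUnit (algebraMap B (Localization.AtPrime p) (t' * μ t * s)) :=
        IsLocalization.map_units (M := p.primeCompl) _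
          (⟨_, mul_mem (mul_mem (show t' ∈ p.primeCompl from ht')
            (show μ t ∈ p.primeCompl from htp)) s.2⟩ : p.primeCompl)
      rw [Pi.zero_apply, ← hu.mul_right_eq_zero, map_mul, mul_assoc, ← Algebra.smul_def (s : B)]
      have h7 : (s : B) • b i = algebraMap _ _ (c i) := (hc i).symm
      rw [h7, ← map_mul, mul_assoc, h6, map_zero])
  rw [← RingTheory.Sequence.isWeaklyRegular_map_algebraMap_iff (Localization.AtPrime q),
    List.map_ofFn]
  exact key

theorem rig_basis {B M : Type*} {ι : Type*} [CommRing B] [AddCommGroup M] [Module B M]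
    [Module.Finite B M] [Module.Projective B M] (d : ι → M) (hd : Function.Surjective d)
    (p : PrimeSpectrum B) : ∃ x : Fin (Module.rankAtStalk M p) → ι,
      (∀ m : M, ∃ s ∉ p.asIdeal, ∃ c : Fin (Module.rankAtStalk M p) → B,
        s • m = ∑ i, c i • d (x i)) ∧
      (∀ c : Fin (Module.rankAtStalk M p) → B, ∑ i, c i • d (x i) = 0 →
        ∀ i, ∃ t ∉ p.asIdeal, t * c i = 0) := by
  let Bp := Localization.AtPrime p.asIdeal
  let Mp := LocalizedModule p.asIdeal.primeCompl M
  let f : M →ₗ[B] Mp := LocalizedModule.mkLinearMap p.asIdeal.primeCompl M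
  have hfp : Module.FinitePresentation B M := Module.finitePresentation_of_projective B M
  have hfl : Module.Flat Bp Mp := inferInstance
  have hfp2 : Module.FinitePresentation Bp Mp := inferInstance
  have hspan : Submodule.span Bp (Set.range (fun i => f (d i))) = ⊤ := by
    have h1 : Submodule.span B (Set.range d) = ⊤ := by
      rw [hd.range_eq, Submodule.span_univ]
    have := span_eq_top_of_isLocalizedModule Bp p.asIdeal.primeCompl f h1
    rw [← Set.range_comp] at this
    exact this
  obtain ⟨κ, a, b, hb⟩ := Module.exists_basis_of_span_of_flat (fun i => f (d i)) hspan
  haveI : Finite κ := Module.Finite.finite_basis b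
  letI := Fintype.ofFinite κ
  have hcard : Fintype.card κ = Module.rankAtStalk M p :=
    (Module.finrank_eq_card_basis b).symm
  let e := Fintype.equivFinOfCardEq hcard
  let b' := b.reindex e
  let x : Fin (Module.rankAtStalk M p) → ι := fun i => a (e.symm i)
  have hb' : ∀ i, b' i = f (d (x i)) := fun i => by simp [b', x, hb]
  refine ⟨x, ?_, ?_⟩
  · intro m
    obtain ⟨s, hs⟩ := IsLocalization.exist_integer_multiples_of_finite p.asIdeal.primeCompl
      (b'.repr (f m))
    choose c hc using hs
    have h1 : f ((s : B) • m) = f (∑ i, c i • d (x i)) := by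
      rw [map_smul, map_sum]
      conv_lhs => rw [← b'.sum_repr (f m)]
      rw [Finset.smul_sum]
      refine Finset.sum_congr rfl fun i _ => ?_
      rw [map_smul, ← hb', ← algebraMap_smul Bp (c i), hc, smul_assoc]
    obtain ⟨t, ht⟩ := (IsLocalizedModule.eq_iff_exists p.asIdeal.primeCompl f).1 h1
    refine ⟨t * s, fun h => (mul_mem t.2 s.2 : (t * s : B) ∈ p.asIdeal.primeCompl) h,
      fun i => t * c i, ?_⟩
    rw [mul_smul]
    have ht2 : (t : B) • ((s : B) • m) = (t : B) • ∑ i, c i • d (x i) := ht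
    rw [ht2, Finset.smul_sum]
    simp only [mul_smul]
  · intro c hc i
    have h1 : ∑ i, algebraMap B Bp (c i) • b' i = 0 := by
      have := congrArg f hc
      rw [map_sum, map_zero] at this
      rw [← this]
      refine Finset.sum_congr rfl fun i _ => ?_
      rw [map_smul, hb', algebraMap_smul]
    have h2 := Fintype.linearIndependent_iff.1 b'.linearIndependent _ h1 i
    obtain ⟨t, ht⟩ := (IsLocalization.map_eq_zero_iff p.asIdeal.primeCompl Bp _).1 h2
    exact ⟨t, t.2, ht⟩

theorem rig_P3 {A B : Type*} [CommRing A] [CommRing B] [Algebra A B]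
    [IsNoetherianRing A] [Algebra.EssFiniteType A B] [Algebra.FormallySmooth A B]
    (p : PrimeSpectrum B) (q : Ideal (B ⊗[A] B)) [q.IsPrime]
    (hq : q = p.asIdeal.comap (Algebra.TensorProduct.lmul' A (S := B)).toRingHom) :
    ∃ x : Fin (Module.rankAtStalk (Ω[B⁄A]) p) → B ⊗[A] B,
      (∀ i, x i ∈ RingHom.ker (Algebra.TensorProduct.lmul' A (S := B)).toRingHom) ∧
      RingTheory.Sequence.IsWeaklyRegular (Localization.AtPrime q) (List.ofFn x) ∧
    (RingHom.ker (Algebra.TensorProduct.lmul' A (S := B)).toRingHom).map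
      (algebraMap (B ⊗[A] B) (Localization.AtPrime q)) =
      Ideal.span (Set.range (fun i => algebraMap _ (Localization.AtPrime q) (x i))) := by
  haveI : IsNoetherianRing B := Algebra.EssFiniteType.isNoetherianRing A B
  haveI : IsNoetherianRing (B ⊗[A] B) := Algebra.EssFiniteType.isNoetherianRing B (B ⊗[A] B)
  obtain ⟨x, h1, h2⟩ := rig_basis (KaehlerDifferential.fromIdeal A B)
    (KaehlerDifferential.fromIdeal_surjective A B) p
  have hz : ∀ y : KaehlerDifferential.ideal A B, KaehlerDifferential.fromIdeal A B y = 0 ↔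
      (y : B ⊗[A] B) ∈ KaehlerDifferential.ideal A B ^ 2 := fun y =>
    Ideal.toCotangent_eq_zero _ y
  have hsm : ∀ (b : B) (y : KaehlerDifferential.ideal A B),
      b • KaehlerDifferential.fromIdeal A B y =
      KaehlerDifferential.fromIdeal A B (algebraMap B (B ⊗[A] B) b • y) := by
    intro b y
    rw [map_smul, algebraMap_smul]
  refine ⟨fun i => x i, fun i => (x i).2, ?_⟩
  let μ : B ⊗[A] B →ₐ[B] B := Algebra.TensorProduct.lmul'' A
  have hμ : RingHom.ker μ = KaehlerDifferential.ideal A B := rfl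
  refine rig_P3core μ p.asIdeal q hq (fun i => (x i : B ⊗[A] B)) (fun i => (x i).2) ?_ ?_
  · intro y hy
    obtain ⟨s, hs, c, hc⟩ := h1 (KaehlerDifferential.fromIdeal A B ⟨y, hy⟩)
    refine ⟨s, hs, c, ?_⟩
    rw [← sub_eq_zero] at hc
    simp only [hsm] at hc
    rw [← map_sum, ← map_sub, hz] at hc
    rw [hμ]; simpa using hc
  · intro c hc
    refine h2 c ?_
    simp only [hsm]
    rw [← map_sum, hz]
    rw [hμ] at hc; simpa using hc

theorem rig_loc_surj {R : Type u} [CommRing R] [IsNoetherianRing R] (S : Submonoid R)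
    {M M' : ModuleCat.{u} R} (g : M ⟶ M') [IsLocalizedModule S g.hom] (i : ℕ) :
    ∀ (X : ModuleCat.{u} R) [Module.Finite R X],
    (∀ e' : Abelian.Ext X M' i, ∃ s ∈ S, ∃ e : Abelian.Ext X M i,
      s • e' = e.comp (Abelian.Ext.mk₀ g) (add_zero i)) ∧
    (∀ e : Abelian.Ext X M i, e.comp (Abelian.Ext.mk₀ g) (add_zero i) = 0 →
      ∃ s ∈ S, s • e = 0) := by
  induction i with
  | zero =>
    intro X _
    haveI : Module.FinitePresentation R X := Module.finitePresentation_of_finite R X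
    constructor
    · intro e'
      obtain ⟨f, rfl⟩ := (Abelian.Ext.mk₀_bijective X M').2 e'
      obtain ⟨h, s, hs⟩ :=
        Module.FinitePresentation.exists_lift_of_isLocalizedModule S g.hom f.hom
      refine ⟨s, s.2, Abelian.Ext.mk₀ (ModuleCat.ofHom h), ?_⟩
      rw [Abelian.Ext.mk₀_comp_mk₀, ← Abelian.Ext.mk₀_smul]
      congr 1
      ext x
      exact (LinearMap.congr_fun hs x).symm
    · intro e he
      obtain ⟨f, rfl⟩ := (Abelian.Ext.mk₀_bijective X M).2 e
      rw [Abelian.Ext.mk₀_comp_mk₀, Abelian.Ext.mk₀_eq_zero_iff] at he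
      obtain ⟨s, hs⟩ := Module.Finite.exists_smul_of_comp_eq_of_isLocalizedModule S g.hom f.hom 0
        (by
          have := congrArg ModuleCat.Hom.hom he
          rw [ModuleCat.hom_comp] at this
          rw [this]; simp)
      refine ⟨s, s.2, ?_⟩
      rw [← Abelian.Ext.mk₀_smul, Abelian.Ext.mk₀_eq_zero_iff]
      ext x
      have := LinearMap.congr_fun hs x
      rw [smul_zero] at this
      exact this
  | succ i ih =>
    intro X _
    obtain ⟨F, _, _, _, _, f, surjf⟩ := Module.exists_finite_presentation R X
    let exac := LinearMap.shortExact_shortComplexKer surjf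
    haveI : Projective f.shortComplexKer.X₂ := by
      have : Module.Projective R f.shortComplexKer.X₂ := by
        change Module.Projective R F
        infer_instance
      infer_instance
    haveI : Module.Finite R f.shortComplexKer.X₁ := by
      change Module.Finite R (LinearMap.ker f)
      infer_instance
    haveI : Module.Finite R f.shortComplexKer.X₂ := by
      change Module.Finite R F
      infer_instance
    obtain ⟨ihs, ihi⟩ := ih f.shortComplexKer.X₁
    obtain ⟨ihs2, -⟩ := ih f.shortComplexKer.X₂
    have sur : ∀ (N : ModuleCat.{u} R) (e : Abelian.Ext X N (i+1)),
        ∃ k : Abelian.Ext f.shortComplexKer.X₁ N i, exac.extClass.comp k (add_comm 1 i) = e :=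
      fun N e => precomp_extClass_surjective_of_projective_X₂ N exac i e
    constructor
    · intro e'
      obtain ⟨k', rfl⟩ := sur _ e'
      obtain ⟨s, hs, k, hk⟩ := ihs k'
      refine ⟨s, hs, exac.extClass.comp k (add_comm 1 i), ?_⟩
      rw [← Abelian.Ext.comp_smul, hk, Abelian.Ext.comp_assoc_of_third_deg_zero]
    · intro e he
      obtain ⟨k, rfl⟩ := sur _ e
      rw [Abelian.Ext.comp_assoc_of_third_deg_zero] at he
      obtain ⟨f', hf'⟩ := Abelian.Ext.contravariant_sequence_exact₁ exac _ _ _ he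
      obtain ⟨s, hs, f2, hf2⟩ := ihs2 f'
      obtain ⟨t, ht, h⟩ := ihi (s • k - (Abelian.Ext.mk₀ f.shortComplexKer.f).comp f2 (zero_add i))
        (by
          rw [sub_eq_add_neg, Abelian.Ext.add_comp, Abelian.Ext.neg_comp,
            Abelian.Ext.smul_comp, ← hf', Abelian.Ext.comp_assoc_of_third_deg_zero, ← hf2,
            Abelian.Ext.comp_smul]
          exact add_neg_cancel _)
      refine ⟨t * s, mul_mem ht hs, ?_⟩
      have h2 := congrArg (fun z => exac.extClass.comp z (add_comm 1 i)) h
      have hz : exac.extClass.comp ((Abelian.Ext.mk₀ f.shortComplexKer.f).comp f2 (zero_add i))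
          (add_comm 1 i) = 0 := exac.extClass_comp_assoc f2
      beta_reduce at h2
      rw [sub_eq_add_neg, Abelian.Ext.comp_smul, Abelian.Ext.comp_add,
        Abelian.Ext.comp_neg, hz, neg_zero, add_zero, Abelian.Ext.comp_zero,
        Abelian.Ext.comp_smul] at h2
      rw [mul_smul]
      exact h2

theorem rig_kill {R : Type u} [CommRing R] {X M : ModuleCat.{u} R} (r : R)
    (h : ∀ x : X, r • x = 0) {i : ℕ} (e : Abelian.Ext X M i) : r • e = 0 := by
  have h1 : r • 𝟙 X = 0 := by
    ext x
    exact h x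
  have h2 : r • e = (Abelian.Ext.mk₀ (r • 𝟙 X)).comp e (zero_add i) := by
    rw [Abelian.Ext.mk₀_smul, Abelian.Ext.smul_comp, Abelian.Ext.mk₀_id_comp]
  rw [h2, h1, Abelian.Ext.mk₀_zero, Abelian.Ext.zero_comp]

theorem rig_rees {R : Type u} [CommRing R] (X : ModuleCat.{u} R) (rs : List R) :
    (∀ r ∈ rs, ∀ x : X, r • x = 0) → ∀ M : ModuleCat.{u} R,
    RingTheory.Sequence.IsWeaklyRegular M rs →
    (∀ i < rs.length, Subsingleton (Abelian.Ext X M i)) ∧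
    Nonempty (Abelian.Ext X M rs.length ≃ₗ[R]
      (X →ₗ[R] (M ⧸ (Ideal.ofList rs • ⊤ : Submodule R M)))) := by
  induction rs with
  | nil =>
    intro _ M _
    refine ⟨by simp, ⟨?_⟩⟩
    have e : (M ⧸ (Ideal.ofList ([] : List R) • ⊤ : Submodule R M)) ≃ₗ[R] M :=
      Submodule.quotEquivOfEqBot _ (by simp)
    exact (Abelian.Ext.linearEquiv₀.trans ModuleCat.homLinearEquiv).trans
      (LinearEquiv.congrRight e.symm)
  | cons r rs ih =>
    intro hk M hM
    rw [RingTheory.Sequence.isWeaklyRegular_cons_iff] at hM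
    obtain ⟨hr, hrs⟩ := hM
    obtain ⟨ih1, ⟨ih2⟩⟩ := ih (fun r hr => hk r (List.mem_cons_of_mem _ hr))
      (ModuleCat.of R (QuotSMulTop r M)) hrs
    have hS := hr.smulShortComplex_shortExact
    have hsur : ∀ (i : ℕ) (e : Abelian.Ext X M (i+1)),
        ∃ e3 : Abelian.Ext X (ModuleCat.of R (QuotSMulTop r M)) i,
          e3.comp hS.extClass rfl = e := by
      intro i e
      refine Abelian.Ext.covariant_sequence_exact₁ X hS e ?_ rfl
      rw [ModuleCat.smulShortComplex_f_eq_smul_id]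
      change Abelian.Ext.comp e (Abelian.Ext.mk₀ (r • 𝟙 M)) _ = 0
      rw [← Abelian.Ext.smul_eq_comp_mk₀]
      exact rig_kill r (hk r List.mem_cons_self) e
    have hz : ∀ i < (r :: rs).length, Subsingleton (Abelian.Ext X M i) := by
      intro i hi
      refine subsingleton_of_forall_eq 0 fun e => ?_
      cases i with
      | zero =>
        obtain ⟨f, rfl⟩ := (Abelian.Ext.mk₀_bijective X M).2 e
        rw [Abelian.Ext.mk₀_eq_zero_iff]
        ext x
        apply hr
        change r • f.hom x = r • (0 : M)
        rw [smul_zero, ← map_smul, hk r List.mem_cons_self, map_zero]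
      | succ j =>
        obtain ⟨e3, rfl⟩ := hsur j e
        have : Subsingleton (Abelian.Ext X (ModuleCat.of R (QuotSMulTop r M)) j) :=
          ih1 j (by simpa using hi)
        rw [Subsingleton.elim e3 0]
        exact Abelian.Ext.zero_comp X j _ _ rfl
    refine ⟨hz, ⟨?_⟩⟩
    have hinj : Function.Injective
        (hS.extClass.postcompOfLinear R X (rfl : rs.length + 1 = rs.length + 1)) := by
      rw [injective_iff_map_eq_zero]
      intro e3 he
      obtain ⟨e2, rfl⟩ := Abelian.Ext.covariant_sequence_exact₃ X hS e3 rfl he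
      have : Subsingleton (Abelian.Ext X M rs.length) := hz _ (by simp)
      have h0 : e2 = 0 := Subsingleton.elim (α := Abelian.Ext X M rs.length) e2 0
      rw [h0, Abelian.Ext.zero_comp]
    have E := LinearEquiv.ofBijective _ ⟨hinj, fun e => hsur _ e⟩
    exact E.symm.trans (ih2.trans (LinearEquiv.congrRight
      (Submodule.quotOfListConsSMulTopEquivQuotSMulTopInner M r rs).symm))

theorem rig_top {n : ℕ} {R B : Type u} [CommRing R] [CommRing B] [Algebra B R]
    (μ : R →ₐ[B] B) [Module R B] (hsm : ∀ (r : R) (b : B), r • b = μ r * b)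
    (p : Ideal B) [p.IsPrime] (q : Ideal R) [q.IsPrime] (hq : q = p.comap (μ : R →+* B))
    (x : Fin n → R) (hx : ∀ i, x i ∈ RingHom.ker μ)
    (hreg : RingTheory.Sequence.IsWeaklyRegular (Localization.AtPrime q) (List.ofFn x))
    (hspan : (RingHom.ker μ).map (algebraMap R (Localization.AtPrime q)) =
      Ideal.span (Set.range (fun i => algebraMap R (Localization.AtPrime q) (x i)))) :
    (∀ i < n, Subsingleton (Abelian.Ext (ModuleCat.of R B)
      (ModuleCat.of R (Localization.AtPrime q)) i)) ∧
    ∃ E : Abelian.Ext (ModuleCat.of R B) (ModuleCat.of R (Localization.AtPrime q)) n ≃+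
      Localization.AtPrime p,
      ∀ (r : R) e, E (r • e) = algebraMap B _ (μ r) * E e := by
  obtain ⟨h1, ⟨h2⟩⟩ := rig_rees (ModuleCat.of R B) (List.ofFn x)
    (by
      intro r hr b
      rw [List.mem_ofFn] at hr
      obtain ⟨i, rfl⟩ := hr
      have h1 : μ (x i) = 0 := hx i
      change x i • (show B from b) = 0
      rw [hsm, h1, zero_mul]) (ModuleCat.of R (Localization.AtPrime q)) hreg
  rw [List.length_ofFn] at h1 h2
  refine ⟨h1, ?_⟩
  letI : Module R (Localization.AtPrime p) :=
    Module.compHom _ ((algebraMap B (Localization.AtPrime p)).comp (μ : R →+* B))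
  have hsm2 : ∀ (r : R) (b : Localization.AtPrime p), r • b = algebraMap B _ (μ r) * b :=
    fun r b => rfl
  let σ : Localization.AtPrime q →ₗ[R] Localization.AtPrime p :=
    { toFun := Localization.localRingHom q p (μ : R →+* B) hq
      map_add' := map_add _
      map_smul' := by
        intro r y
        rw [Algebra.smul_def, map_mul, Localization.localRingHom_to_map, RingHom.id_apply, hsm2]
        rfl }
  have hσs : Function.Surjective σ := by
    intro y
    obtain ⟨b, s, rfl⟩ := IsLocalization.exists_mk'_eq p.primeCompl y
    have hs : algebraMap B R s ∈ q.primeCompl := by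
      intro h
      have h2 : algebraMap B R s ∈ q := h
      rw [hq, Ideal.mem_comap] at h2
      simp only [RingHom.coe_coe, AlgHom.commutes] at h2
      exact s.2 h2
    refine ⟨IsLocalization.mk' _ (algebraMap B R b) ⟨_, hs⟩, ?_⟩
    change Localization.localRingHom q p (μ : R →+* B) hq _ = _
    rw [Localization.localRingHom_mk']
    congr 1
    · simp
    · ext; simp
  have hker : (Ideal.ofList (List.ofFn x) • ⊤ : Submodule R (Localization.AtPrime q)) =
      LinearMap.ker σ := by
    have e1 : (LinearMap.ker σ) = (RingHom.ker
        (Localization.localRingHom q p (μ : R →+* B) hq)).restrictScalars R := rfl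
    have e2 : Ideal.ofList (List.ofFn x) = Ideal.span (Set.range x) := by
      simp [Ideal.ofList, Set.range, List.mem_ofFn]
    rw [e1, rig_ker_loc, hspan, e2, Ideal.smul_top_eq_map, Ideal.map_span, ← Set.range_comp]
    rfl
  let e3 : (Localization.AtPrime q ⧸
      (Ideal.ofList (List.ofFn x) • ⊤ : Submodule R (Localization.AtPrime q))) ≃ₗ[R]
      Localization.AtPrime p :=
    (Submodule.quotEquivOfEq _ _ hker).trans (σ.quotKerEquivOfSurjective hσs)
  let e4 : (B →ₗ[R] Localization.AtPrime p) ≃ₗ[R] Localization.AtPrime p :=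
    { toFun := fun f => f 1
      map_add' := fun f g => rfl
      map_smul' := fun r f => rfl
      invFun := fun y =>
        { toFun := fun b => algebraMap B _ b * y
          map_add' := fun a b => by rw [map_add, add_mul]
          map_smul' := fun r b => by
            rw [hsm, map_mul, RingHom.id_apply, hsm2, mul_assoc] }
      left_inv := fun f => by
        ext b
        change algebraMap B _ b * f 1 = f b
        have h3 : algebraMap B R b • (1 : B) = b := by rw [hsm]; simp
        conv_rhs => rw [← h3, map_smul, hsm2]
        simp
      right_inv := fun y => by
        change algebraMap B _ 1 * y = y
        simp }
  let E := h2.trans ((LinearEquiv.congrRight e3).trans e4)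
  exact ⟨E.toAddEquiv, fun r e => (map_smul E r e)⟩

theorem rig_pd {n : ℕ} {R B : Type u} [CommRing R] [CommRing B] [Algebra B R]
    [IsNoetherianRing R]
    (μ : R →ₐ[B] B) [Module R B] (hsm : ∀ (r : R) (b : B), r • b = μ r * b)
    (H : ∀ (p : Ideal B) [p.IsPrime] (q : Ideal R) [q.IsPrime],
      q = p.comap (μ : R →+* B) → ∃ x : Fin n → R, (∀ i, x i ∈ RingHom.ker μ) ∧
      RingTheory.Sequence.IsWeaklyRegular (Localization.AtPrime q) (List.ofFn x) ∧
      (RingHom.ker μ).map (algebraMap R (Localization.AtPrime q)) =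
      Ideal.span (Set.range (fun i => algebraMap R (Localization.AtPrime q) (x i)))) :
    HasProjectiveDimensionLE (ModuleCat.of R B) n := by
  have hμs : Function.Surjective μ := fun b => ⟨algebraMap B R b, by simp⟩
  have hfin : Module.Finite R B := by
    refine Module.Finite.of_surjective ({ toFun := μ, map_add' := map_add μ, map_smul' := ?_ } :
      R →ₗ[R] B) hμs
    intro r s
    rw [smul_eq_mul, map_mul, RingHom.id_apply, hsm]
  haveI : Module.Finite R (ModuleCat.of R B) := hfin
  rw [ModuleCat.hasProjectiveDimensionLE_iff_forall_primeSpectrum]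
  intro Q
  by_cases hQ : RingHom.ker μ ≤ Q.asIdeal
  · let M' := (ModuleCat.of R B).localizedModule Q.1.primeCompl
    let f : B →ₗ[R] M' := (ModuleCat.of R B).localizedModuleMkLinearMap Q.1.primeCompl
    haveI hf : IsLocalizedModule Q.1.primeCompl f :=
      ModuleCat.localizedModule_isLocalizedModule _ _
    let q := Q.asIdeal
    have hq : q = (q.comap (algebraMap B R)).comap (μ : R →+* B) := by
      ext r
      rw [Ideal.mem_comap, Ideal.mem_comap]
      have h1 : r - algebraMap B R (μ r) ∈ q := hQ (by
        rw [RingHom.mem_ker, map_sub, AlgHom.commutes]; simp)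
      constructor
      · intro h
        have := q.sub_mem h h1
        simpa using this
      · intro h
        have := q.add_mem h h1
        simpa using this
    obtain ⟨x, hx, hreg, hspan⟩ := H (q.comap (algebraMap B R)) q hq
    let π : Localization.AtPrime q →ₗ[Localization.AtPrime q] M' :=
      LinearMap.toSpanSingleton _ M' (f 1)
    have hfr : ∀ r : R, r • f 1 = f (μ r) := by
      intro r
      rw [← map_smul, hsm, mul_one]
    have hπr : ∀ r : R, π (algebraMap R _ r) = f (μ r) := by
      intro r
      rw [← hfr]
      exact algebraMap_smul _ r (f 1)
    have hπs : Function.Surjective π := by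
      intro m
      obtain ⟨⟨b, s⟩, hbs⟩ := IsLocalizedModule.surj Q.1.primeCompl f m
      refine ⟨IsLocalization.mk' _ (algebraMap B R b) s, ?_⟩
      have hu := IsLocalizedModule.map_units f s
      rw [Module.End.isUnit_iff] at hu
      apply hu.1
      rw [Module.algebraMap_end_apply, Module.algebraMap_end_apply]
      have h2 : (s : R) • π (IsLocalization.mk' _ (algebraMap B R b) s) =
          π (algebraMap R _ (algebraMap B R b)) := by
        rw [← algebraMap_smul (Localization.AtPrime q) (s : R), ← map_smul, smul_eq_mul,
          IsLocalization.mk'_spec']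
      rw [h2, hπr, AlgHom.commutes]
      exact hbs.symm
    have hker : LinearMap.ker π =
        (RingHom.ker μ).map (algebraMap R (Localization.AtPrime q)) := by
      apply le_antisymm
      · intro y hy
        obtain ⟨r, s, rfl⟩ := IsLocalization.exists_mk'_eq q.primeCompl y
        have h2 : π (algebraMap R _ r) = 0 := by
          rw [← IsLocalization.mk'_spec' (Localization.AtPrime q) r s, ← smul_eq_mul, map_smul,
            LinearMap.mem_ker.mp hy, smul_zero]
        rw [hπr] at h2
        obtain ⟨t, ht⟩ := (IsLocalizedModule.eq_zero_iff Q.1.primeCompl f).mp h2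
        have ht2 : (t : R) • (μ r) = 0 := ht
        rw [hsm, ← map_mul] at ht2
        rw [IsLocalization.mk'_mem_map_algebraMap_iff]
        exact ⟨t, t.2, ht2⟩
      · rw [Ideal.map_le_iff_le_comap]
        intro r hr
        rw [Ideal.mem_comap, LinearMap.mem_ker, hπr, RingHom.mem_ker.mp hr, map_zero]
    let rs := (List.ofFn x).map (algebraMap R (Localization.AtPrime q))
    have hofl : Ideal.ofList rs = LinearMap.ker π := by
      rw [hker, hspan]
      simp only [Ideal.ofList, rs, List.map_ofFn, List.mem_ofFn]
      rfl
    have hrl : rs.length = n := by simp [rs]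
    have hrw : RingTheory.Sequence.IsWeaklyRegular (Localization.AtPrime q) rs :=
      (RingTheory.Sequence.isWeaklyRegular_map_algebraMap_iff _ _ _).mpr hreg
    have hmem : ∀ r ∈ rs, r ∈ IsLocalRing.maximalIdeal (Localization.AtPrime q) := by
      intro r hr
      simp only [rs, List.mem_map, List.mem_ofFn] at hr
      obtain ⟨_, ⟨i, rfl⟩, rfl⟩ := hr
      rw [IsLocalization.AtPrime.to_map_mem_maximal_iff _ q]
      exact hQ (hx i)
    have hpd := ModuleCat.projectiveDimension_quotient_eq_add_length_of_isWeaklyRegular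
      (ModuleCat.of (Localization.AtPrime q) (Localization.AtPrime q)) rs hrw hmem
    have hpd0 := ModuleCat.projectiveDimension_eq_zero_of_projective
      (ModuleCat.of (Localization.AtPrime q) (Localization.AtPrime q))
    rw [hpd0, zero_add, hrl] at hpd
    have h3 := (projectiveDimension_le_iff _ _).mp hpd.le
    have heq : (Ideal.ofList rs • (⊤ : Submodule (Localization.AtPrime q)
        (Localization.AtPrime q))) = LinearMap.ker π := by
      rw [← hofl]; simp
    let e := (Submodule.quotEquivOfEq _ _ heq).trans (π.quotKerEquivOfSurjective hπs)
    exact hasProjectiveDimensionLT_of_iso (X' := M') e.toModuleIso _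
  · have : Limits.IsZero ((ModuleCat.of R B).localizedModule Q.1.primeCompl) := by
      rw [ModuleCat.isZero_iff_subsingleton]
      obtain ⟨r, hr, hrQ⟩ := SetLike.not_le_iff_exists.mp hQ
      let f : B →ₗ[R] _ := (ModuleCat.of R B).localizedModuleMkLinearMap Q.1.primeCompl
      haveI hf : IsLocalizedModule Q.1.primeCompl f :=
        ModuleCat.localizedModule_isLocalizedModule _ _
      rw [IsLocalizedModule.subsingleton_iff Q.1.primeCompl f]
      intro b
      refine ⟨r, hrQ, ?_⟩
      rw [hsm, RingHom.mem_ker.mp hr, zero_mul]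
    have h0 := this.hasProjectiveDimensionLT_zero
    exact hasProjectiveDimensionLT_of_ge _ 0 _ (Nat.zero_le _)

theorem rig_inv_local {B D : Type u} [CommRing B] [IsNoetherianRing B] [AddCommGroup D] [Module B D]
    [Module.Finite B D] (p : Ideal B) [p.IsPrime]
    (f : D →ₗ[B] Localization.AtPrime p) [IsLocalizedModule p.primeCompl f] :
    ∃ (d : D) (φ : D →ₗ[B] B), φ d ∉ p ∧ ∀ x, φ x • d = φ d • x := by
  haveI : Module.FinitePresentation B D := Module.finitePresentation_of_finite B D
  obtain ⟨⟨d, s⟩, hd⟩ := IsLocalizedModule.surj p.primeCompl f 1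
  have hd' : f d = algebraMap B _ (s : B) := by
    have h1 : (s : B) • (1 : Localization.AtPrime p) = f d := hd
    rw [← h1, Algebra.algebraMap_eq_smul_one]
  obtain ⟨φ, s', hφ⟩ := Module.FinitePresentation.exists_lift_of_isLocalizedModule p.primeCompl
    (Algebra.linearMap B (Localization.AtPrime p)) f
  have hφ' : ∀ x, algebraMap B (Localization.AtPrime p) (φ x) = (s' : B) • f x := by
    intro x
    exact DFunLike.congr_fun hφ x
  let g1 : D →ₗ[B] D := (LinearMap.toSpanSingleton B D d) ∘ₗ φ
  let g2 : D →ₗ[B] D := φ d • LinearMap.id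
  obtain ⟨t, ht⟩ := Module.Finite.exists_smul_of_comp_eq_of_isLocalizedModule p.primeCompl f
    (g₁ := g1) (g₂ := g2) (by
      ext x
      simp only [g1, g2, LinearMap.comp_apply, LinearMap.toSpanSingleton_apply, map_smul,
        LinearMap.smul_apply, LinearMap.id_apply]
      rw [Algebra.smul_def, Algebra.smul_def (φ d), hφ', hφ']
      simp only [Algebra.smul_def]
      ring)
  refine ⟨d, (t : B) • φ, ?_, ?_⟩
  · have h1 : φ d ∈ p.primeCompl := by
      rw [← IsLocalization.AtPrime.isUnit_to_map_iff (Localization.AtPrime p) p, hφ', hd',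
        Algebra.smul_def]
      exact (IsLocalization.map_units _ s').mul (IsLocalization.map_units _ s)
    exact p.primeCompl.mul_mem t.2 h1
  · intro x
    have := DFunLike.congr_fun ht x
    simpa [g1, g2, Submonoid.smul_def, mul_smul] using this

theorem rig_inv_data {B D : Type u} [CommRing B] [IsNoetherianRing B] [AddCommGroup D] [Module B D]
    [Module.Finite B D] (H : ∀ (p : Ideal B) [p.IsPrime],
      ∃ f : D →ₗ[B] Localization.AtPrime p, IsLocalizedModule p.primeCompl f) :
    (∀ (φ : Module.Dual B D) x y, φ x • y = φ y • x) ∧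
    ∃ (ι : Type u) (_ : Fintype ι) (φ : ι → Module.Dual B D) (d : ι → D), ∑ j, φ j (d j) = 1 := by
  have H2 : ∀ (p : Ideal B) [p.IsPrime], 
    ∃ (d : D) (φ : D →ₗ[B] B), φ d ∉ p ∧ ∀ x, φ x • d = φ d • x := by
    intro p _
    obtain ⟨f, hf⟩ := H p
    exact rig_inv_local p f
  constructor
  · intro φ x y
    by_contra hne
    let J := (Submodule.span B {φ x • y - φ y • x}).annihilator
    have hJ : J ≠ ⊤ := by
      intro h
      rw [Submodule.annihilator_eq_top_iff, Submodule.span_singleton_eq_bot] at h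
      exact hne (sub_eq_zero.mp h)
    obtain ⟨m, hm, hJm⟩ := Ideal.exists_le_maximal J hJ
    obtain ⟨d, ψ, hψ, h⟩ := H2 m
    have : ψ d * ψ d ∈ J := by
      have e1 : ∀ z, ψ d * φ z = ψ z * φ d := by
        intro z
        rw [← smul_eq_mul, ← map_smul φ, ← h, map_smul, smul_eq_mul]
      have e2 : ∀ z w, (ψ d * ψ d) • (φ z • w) = (ψ z * φ d * ψ w) • d := by
        intro z w
        rw [← e1, mul_smul (ψ d * φ z), h, smul_smul, smul_smul]
        congr 1
        ring
      rw [Submodule.mem_annihilator_span_singleton, smul_sub, e2, e2, sub_eq_zero]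
      congr 1
      ring
    have h2 := hJm this
    rcases hm.isPrime.mem_or_mem h2 with h3 | h3 <;> exact hψ h3
  · have : Ideal.span (Set.range fun z : Module.Dual B D × D => z.1 z.2) = ⊤ := by
      by_contra hne
      obtain ⟨m, hm, hJm⟩ := Ideal.exists_le_maximal _ hne
      obtain ⟨d, ψ, hψ, h⟩ := H2 m
      exact hψ (hJm (Ideal.subset_span ⟨(ψ, d), rfl⟩))
    have h1 : (1 : B) ∈ Ideal.span (Set.range fun z : Module.Dual B D × D => z.1 z.2) := by
      rw [this]; trivial
    rw [Ideal.span, Finsupp.mem_span_range_iff_exists_finsupp] at h1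
    obtain ⟨c, hc⟩ := h1
    refine ⟨c.support, inferInstance, fun z => c z • z.1.1, fun z => z.1.2, ?_⟩
    rw [← hc, Finsupp.sum]
    exact Finset.sum_coe_sort c.support (fun a => c a • a.1 a.2)

theorem rig_dual_sym {B D : Type u} [CommRing B] [AddCommGroup D] [Module B D]
    (S : ∀ (φ : Module.Dual B D) x y, φ x • y = φ y • x) (φ ψ : Module.Dual B D) (y : D) :
    φ y • ψ = ψ y • φ := by
  ext x
  rw [LinearMap.smul_apply, LinearMap.smul_apply, ← map_smul ψ, ← S, map_smul, smul_eq_mul,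
    smul_eq_mul, mul_comm]

theorem rig_inv {B D : Type u} [CommRing B] [AddCommGroup D] [Module B D]
    (S : ∀ (φ : Module.Dual B D) x y, φ x • y = φ y • x)
    (ι : Type u) [Fintype ι] (φ : ι → Module.Dual B D) (d : ι → D) (h1 : ∑ j, φ j (d j) = 1) :
    Nonempty ((Module.Dual B D) ⊗[B] D ≃ₗ[B] B) := by
  let T : (Module.Dual B D) ⊗[B] D := ∑ j, φ j ⊗ₜ d j
  have hT : contractLeft B D T = 1 := by
    simp only [T, map_sum, contractLeft_apply, h1]
  have hz : ∀ z, (contractLeft B D z) • T = z := by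
    intro z
    induction z with
    | zero => simp
    | add a b ha hb => rw [map_add, add_smul, ha, hb]
    | tmul ψ x =>
      rw [contractLeft_apply, Finset.smul_sum]
      have : ∀ j, ψ x • (φ j ⊗ₜ[B] d j) = φ j (d j) • (ψ ⊗ₜ[B] x) := by
        intro j
        rw [← TensorProduct.tmul_smul, S, TensorProduct.tmul_smul, TensorProduct.smul_tmul',
          rig_dual_sym S, TensorProduct.smul_tmul']
      simp only [this]
      rw [← Finset.sum_smul, h1, one_smul]
  refine ⟨LinearEquiv.ofLinear (contractLeft B D) (LinearMap.toSpanSingleton B _ T) ?_ ?_⟩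
  · ext
    simp [hT]
  · apply LinearMap.ext
    intro z
    exact hz z

noncomputable def rig_pc {R : Type u} [CommRing R] (X : ModuleCat.{u} R) (i : ℕ)
    (M M' : Type u) [AddCommGroup M] [Module R M] [AddCommGroup M'] [Module R M'] :
    (M →ₗ[R] M') →ₗ[R] (Abelian.Ext X (ModuleCat.of R M) i →ₗ[R]
      Abelian.Ext X (ModuleCat.of R M') i) where
  toFun f :=
    { toFun := fun e => e.comp (Abelian.Ext.mk₀ (ModuleCat.ofHom f)) (add_zero i)
      map_add' := fun a b => Abelian.Ext.add_comp _ _ _ _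
      map_smul' := fun r a => Abelian.Ext.smul_comp _ _ _ _ }
  map_add' f g := by
    ext e
    change e.comp (Abelian.Ext.mk₀ (ModuleCat.ofHom (f + g))) (add_zero i) = 
      e.comp (Abelian.Ext.mk₀ (ModuleCat.ofHom f)) (add_zero i) +
      e.comp (Abelian.Ext.mk₀ (ModuleCat.ofHom g)) (add_zero i)
    rw [← Abelian.Ext.comp_add, ← Abelian.Ext.mk₀_add]
    rfl
  map_smul' r f := by
    ext e
    change e.comp (Abelian.Ext.mk₀ (ModuleCat.ofHom (r • f))) (add_zero i) = 
      r • e.comp (Abelian.Ext.mk₀ (ModuleCat.ofHom f)) (add_zero i)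
    rw [← Abelian.Ext.comp_smul, ← Abelian.Ext.mk₀_smul]
    rfl

theorem rig_pc_id {R : Type u} [CommRing R] (X : ModuleCat.{u} R) (i : ℕ)
    (M : Type u) [AddCommGroup M] [Module R M] (e : Abelian.Ext X (ModuleCat.of R M) i) :
    rig_pc X i M M LinearMap.id e = e := Abelian.Ext.comp_mk₀_id e

theorem rig_pc_comp {R : Type u} [CommRing R] (X : ModuleCat.{u} R) (i : ℕ)
    (M M' M'' : Type u) [AddCommGroup M] [Module R M] [AddCommGroup M'] [Module R M']
    [AddCommGroup M''] [Module R M''] (f : M →ₗ[R] M') (g : M' →ₗ[R] M'')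
    (e : Abelian.Ext X (ModuleCat.of R M) i) :
    rig_pc X i M' M'' g (rig_pc X i M M' f e) = rig_pc X i M M'' (g ∘ₗ f) e := by
  change (e.comp (Abelian.Ext.mk₀ (ModuleCat.ofHom f)) (add_zero i)).comp
    (Abelian.Ext.mk₀ (ModuleCat.ofHom g)) (add_zero i) = _
  rw [Abelian.Ext.comp_assoc_of_third_deg_zero, Abelian.Ext.mk₀_comp_mk₀]
  rfl

theorem rig_main {R B M D : Type u} [CommRing R] [CommRing B] [Algebra B R]
    (μ : R →ₐ[B] B) [Module R B] (hsm : ∀ (r : R) (b : B), r • b = μ r * b)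
    (ι₂ : B →+* R) (hι₂ : ∀ b, μ (ι₂ b) = b)
    [AddCommGroup D] [Module B D] (n : ℕ)
    (θ : D ≃+ Abelian.Ext (ModuleCat.of R B) (ModuleCat.of R R) n)
    (hθ : ∀ b d, θ (b • d) = algebraMap B R b • θ d)
    (S : ∀ (φ : Module.Dual B D) x y, φ x • y = φ y • x)
    (ι : Type u) [Fintype ι] (φ : ι → Module.Dual B D) (d : ι → D) (h1 : ∑ j, φ j (d j) = 1)
    [AddCommGroup M] [Module R M]
    (τ : Module.Dual B D →+ Module.Dual B D →+ M)
    (hτ1 : ∀ b α β, τ (b • α) β = algebraMap B R b • τ α β)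
    (hτ2 : ∀ b α β, τ α (b • β) = ι₂ b • τ α β)
    (ev : D → D → M →ₗ[R] R)
    (hev : ∀ x y α β, ev x y (τ α β) = algebraMap B R (α x) * ι₂ (β y))
    (hM : ∀ m, m = ∑ j, ∑ k, ev (d j) (d k) m • τ (φ j) (φ k)) :
    (∀ i, Subsingleton (Abelian.Ext (ModuleCat.of R B) (ModuleCat.of R R) i) →
      Subsingleton (Abelian.Ext (ModuleCat.of R B) (ModuleCat.of R M) i)) ∧
    ∃ G : Module.Dual B D ≃+ Abelian.Ext (ModuleCat.of R B) (ModuleCat.of R M) n,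
      ∀ b ψ, G (b • ψ) = algebraMap B R b • G ψ := by
  have hid : (LinearMap.id : M →ₗ[R] M) = ∑ j, ∑ k,
      (LinearMap.toSpanSingleton R M (τ (φ j) (φ k))) ∘ₗ (ev (d j) (d k)) := by
    ext m
    simp only [LinearMap.id_apply, LinearMap.sum_apply, LinearMap.comp_apply,
      LinearMap.toSpanSingleton_apply]
    exact hM m
  let star (i : ℕ) (e : Abelian.Ext (ModuleCat.of R B) (ModuleCat.of R R) i) (m : M) :
      Abelian.Ext (ModuleCat.of R B) (ModuleCat.of R M) i :=
    rig_pc (ModuleCat.of R B) i R M (LinearMap.toSpanSingleton R M m) e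
  have hdec : ∀ i (e : Abelian.Ext (ModuleCat.of R B) (ModuleCat.of R M) i),
      e = ∑ j, ∑ k, star i (rig_pc (ModuleCat.of R B) i M R (ev (d j) (d k)) e)
        (τ (φ j) (φ k)) := by
    intro i e
    conv_lhs => rw [← rig_pc_id (ModuleCat.of R B) i M e, hid]
    simp only [map_sum, LinearMap.sum_apply, star, rig_pc_comp]
  refine ⟨?_, ?_⟩
  · intro i hi
    refine ⟨fun a b => ?_⟩
    rw [hdec i a, hdec i b]
    congr! 5
  have star_smul : ∀ (r : R) e m, star n e (r • m) = r • star n e m := by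
    intro r e m
    have : LinearMap.toSpanSingleton R M (r • m) = r • LinearMap.toSpanSingleton R M m := by
      ext; simp
    simp only [star, this, map_smul, LinearMap.smul_apply]
  have star_smul' : ∀ (r : R) e m, star n (r • e) m = r • star n e m := by
    intro r e m
    simp only [star, map_smul]
  have star_add : ∀ e m m', star n e (m + m') = star n e m + star n e m' := by
    intro e m m'
    have : LinearMap.toSpanSingleton R M (m + m') = LinearMap.toSpanSingleton R M m +
      LinearMap.toSpanSingleton R M m' := by
      ext; simp
    simp only [star, this, map_add, LinearMap.add_apply]
  have star_ev : ∀ (w : M →ₗ[R] R) e m, rig_pc (ModuleCat.of R B) n M R w (star n e m) =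
      w m • e := by
    intro w e m
    have : w ∘ₗ LinearMap.toSpanSingleton R M m = w m • LinearMap.id := by
      ext; simp
    simp only [star, rig_pc_comp, this, map_smul, LinearMap.smul_apply, rig_pc_id]
  have hact : ∀ b (M' : ModuleCat.{u} R) (e : Abelian.Ext (ModuleCat.of R B) M' n),
      ι₂ b • e = algebraMap B R b • e := by
    intro b M' e
    rw [← sub_eq_zero, ← sub_smul]
    apply rig_kill
    intro x
    change (ι₂ b - algebraMap B R b) • (show B from x) = 0
    rw [hsm, map_sub, hι₂, AlgHom.commutes]
    simp
  let G0 : Module.Dual B D →+ Abelian.Ext (ModuleCat.of R B) (ModuleCat.of R M) n :=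
    AddMonoidHom.mk' (fun ψ => ∑ j, star n (θ (d j)) (τ (φ j) ψ)) (by
      intro a b
      simp only [map_add, star_add, Finset.sum_add_distrib])
  have hG0 : ∀ ψ, G0 ψ = ∑ j, star n (θ (d j)) (τ (φ j) ψ) := fun _ => rfl
  have hlin : ∀ b ψ, G0 (b • ψ) = algebraMap B R b • G0 ψ := by
    intro b ψ
    rw [← hact, hG0, hG0, Finset.smul_sum]
    simp only [hτ2, star_smul]
  have hkey : ∀ x α ψ, star n (θ x) (τ α ψ) = algebraMap B R (α x) • G0 ψ := by
    intro x α ψ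
    rw [hG0, Finset.smul_sum]
    have : ∀ j, algebraMap B R (α x) • star n (θ (d j)) (τ (φ j) ψ) =
        algebraMap B R (φ j (d j)) • star n (θ x) (τ α ψ) := by
      intro j
      rw [← star_smul', ← hθ, S, hθ, star_smul', ← star_smul, ← hτ1, rig_dual_sym S, hτ1,
        star_smul]
    simp only [this]
    rw [← Finset.sum_smul, ← map_sum, h1, map_one, one_smul]
  refine ⟨AddEquiv.ofBijective G0 ⟨?_, ?_⟩, hlin⟩
  · rw [injective_iff_map_eq_zero]
    intro ψ hψ
    have h2 : ∀ x y : D, ψ y • x = 0 := by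
      intro x y
      have h3 : rig_pc (ModuleCat.of R B) n M R (ev x y) (G0 ψ) = θ (ψ y • x) := by
        rw [hG0, map_sum]
        have : ∀ j, rig_pc (ModuleCat.of R B) n M R (ev x y) (star n (θ (d j)) (τ (φ j) ψ)) =
            algebraMap B R (φ j (d j)) • θ (ψ y • x) := by
          intro j
          rw [star_ev, hev, mul_smul, hact, ← hθ, ← hθ, ← hθ, smul_comm, S (φ j), smul_comm]
        simp only [this]
        rw [← Finset.sum_smul, ← map_sum, h1, map_one, one_smul]
      rw [hψ, map_zero] at h3
      exact (map_eq_zero_iff θ θ.injective).mp h3.symm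
    ext y
    have : ψ y = ∑ j, φ j (ψ y • d j) := by
      simp only [map_smul]
      rw [← Finset.smul_sum, h1, smul_eq_mul, mul_one]
    rw [this]
    simp [h2]
  · intro e
    refine ⟨∑ j, ∑ k, φ j (θ.symm (rig_pc (ModuleCat.of R B) n M R (ev (d j) (d k)) e)) • φ k, ?_⟩
    conv_rhs => rw [hdec n e]
    simp only [map_sum, hlin, ← hkey, AddEquiv.apply_symm_apply]

theorem rig_act {R B : Type u} [CommRing R] [CommRing B] [Algebra B R]
    (μ : R →ₐ[B] B) [Module R B] (hsm : ∀ (r : R) (b : B), r • b = μ r * b)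
    {M : ModuleCat.{u} R} {i : ℕ} (e : Abelian.Ext (ModuleCat.of R B) M i)
    (r r' : R) (h : μ r = μ r') : r • e = r' • e := by
  rw [← sub_eq_zero, ← sub_smul]
  apply rig_kill
  intro x
  change (r - r') • (show B from x) = 0
  rw [hsm, map_sub, h, sub_self, zero_mul]

theorem rig_D {n : ℕ} {R B : Type u} [CommRing R] [CommRing B] [Algebra B R]
    [IsNoetherianRing R]
    (μ : R →ₐ[B] B) [Module R B] (hsm : ∀ (r : R) (b : B), r • b = μ r * b)
    (H : ∀ (p : Ideal B) [p.IsPrime] (q : Ideal R) [q.IsPrime],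
      q = p.comap (μ : R →+* B) → ∃ x : Fin n → R, (∀ i, x i ∈ RingHom.ker μ) ∧
      RingTheory.Sequence.IsWeaklyRegular (Localization.AtPrime q) (List.ofFn x) ∧
      (RingHom.ker μ).map (algebraMap R (Localization.AtPrime q)) =
      Ideal.span (Set.range (fun i => algebraMap R (Localization.AtPrime q) (x i))))
    {D : Type u} [AddCommGroup D] [Module B D]
    (θ : D ≃+ Abelian.Ext (ModuleCat.of R B) (ModuleCat.of R R) n)
    (hθ : ∀ b d, θ (b • d) = algebraMap B R b • θ d) :
    (∀ i, i ≠ n → Subsingleton (Abelian.Ext (ModuleCat.of R B) (ModuleCat.of R R) i)) ∧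
    Module.Finite B D ∧ ∀ (p : Ideal B) [p.IsPrime],
      ∃ f : D →ₗ[B] Localization.AtPrime p, IsLocalizedModule p.primeCompl f := by
  have hμs : Function.Surjective μ := fun b => ⟨algebraMap B R b, by simp⟩
  have hfin : Module.Finite R B := by
    refine Module.Finite.of_surjective ({ toFun := μ, map_add' := map_add μ, map_smul' := ?_ } :
      R →ₗ[R] B) hμs
    intro r s
    rw [smul_eq_mul, map_mul, RingHom.id_apply, hsm]
  haveI hfin' : Module.Finite R (ModuleCat.of R B) := hfin
  haveI hfin'' : Module.Finite R (ModuleCat.of R R) := inferInstanceAs (Module.Finite R R)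
  have hθ' : ∀ r d, r • θ d = θ (μ r • d) := by
    intro r d
    rw [hθ]
    apply rig_act μ hsm
    simp
  refine ⟨?_, ?_, ?_⟩
  · intro i hi
    rcases lt_or_gt_of_ne hi with hi | hi
    · refine subsingleton_of_forall_eq 0 fun e => ?_
      by_contra hne
      let J := (Submodule.span R {e}).annihilator
      have hJ : J ≠ ⊤ := by
        intro h
        rw [Submodule.annihilator_eq_top_iff, Submodule.span_singleton_eq_bot] at h
        exact hne h
      obtain ⟨q, hqm, hJq⟩ := Ideal.exists_le_maximal J hJ
      haveI := hqm.isPrime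
      have hQ : RingHom.ker μ ≤ q := by
        intro r hr
        apply hJq
        rw [Submodule.mem_annihilator_span_singleton, rig_act μ hsm e r 0 (by simpa using hr),
          zero_smul]
      have hq : q = (q.comap (algebraMap B R)).comap (μ : R →+* B) := by
        ext r
        rw [Ideal.mem_comap, Ideal.mem_comap]
        have h1 : r - algebraMap B R (μ r) ∈ q := hQ (by
          rw [RingHom.mem_ker, map_sub, AlgHom.commutes]; simp)
        constructor
        · intro h
          have := q.sub_mem h h1
          simpa using this
        · intro h
          have := q.add_mem h h1
          simpa using this
      obtain ⟨x, hx, hreg, hspan⟩ := H (q.comap (algebraMap B R)) q hq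
      obtain ⟨h1, -⟩ := rig_top μ hsm _ q hq x hx hreg hspan
      haveI := h1 i hi
      let g : ModuleCat.of R R ⟶ ModuleCat.of R (Localization.AtPrime q) :=
        ModuleCat.ofHom (Algebra.linearMap R (Localization.AtPrime q))
      haveI : IsLocalizedModule q.primeCompl g.hom :=
        inferInstanceAs (IsLocalizedModule q.primeCompl
          (Algebra.linearMap R (Localization.AtPrime q)))
      obtain ⟨s, hs, hse⟩ := (rig_loc_surj q.primeCompl g i (ModuleCat.of R B)).2 e
        (Subsingleton.elim _ _)
      exact hs (hJq (by rwa [Submodule.mem_annihilator_span_singleton]))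
    · haveI := rig_pd μ hsm H
      exact HasProjectiveDimensionLT.subsingleton (ModuleCat.of R B) (n + 1) i hi _
  · have h1 : Module.Finite R (Abelian.Ext (ModuleCat.of R B) (ModuleCat.of R R) n) :=
      ModuleCat.finite_ext _ _ _ _
    obtain ⟨T, hT⟩ := h1
    classical
    refine ⟨T.image θ.symm, ?_⟩
    rw [eq_top_iff]
    intro x _
    have hx : θ x ∈ Submodule.span R (T : Set _) := by rw [hT]; trivial
    have : ∀ e ∈ Submodule.span R (T : Set _),
        θ.symm e ∈ Submodule.span B (T.image θ.symm : Set D) := by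
      intro e he
      induction he using Submodule.span_induction with
      | mem e he =>
        apply Submodule.subset_span
        rw [Finset.coe_image]
        exact ⟨e, he, rfl⟩
      | zero => rw [map_zero]; exact zero_mem _
      | add a b _ _ ha hb => rw [map_add]; exact add_mem ha hb
      | smul r a _ ha =>
        obtain ⟨y, rfl⟩ := θ.surjective a
        rw [hθ', θ.symm_apply_apply]
        rw [θ.symm_apply_apply] at ha
        exact Submodule.smul_mem _ _ ha
    simpa using this _ hx
  · intro p _
    let q : Ideal R := p.comap (μ : R →+* B)
    haveI : q.IsPrime := Ideal.comap_isPrime _ _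
    obtain ⟨x, hx, hreg, hspan⟩ := H p q rfl
    obtain ⟨-, E, hE⟩ := rig_top μ hsm p q rfl x hx hreg hspan
    let g : ModuleCat.of R R ⟶ ModuleCat.of R (Localization.AtPrime q) :=
      ModuleCat.ofHom (Algebra.linearMap R (Localization.AtPrime q))
    haveI : IsLocalizedModule q.primeCompl g.hom :=
      inferInstanceAs (IsLocalizedModule q.primeCompl
        (Algebra.linearMap R (Localization.AtPrime q)))
    obtain ⟨hs, hi⟩ := rig_loc_surj q.primeCompl g n (ModuleCat.of R B)
    let f : D →ₗ[B] Localization.AtPrime p :=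
      { toFun := fun x => E ((θ x).comp (Abelian.Ext.mk₀ g) (add_zero n))
        map_add' := fun a b => by rw [map_add, Abelian.Ext.add_comp, map_add]
        map_smul' := fun b a => by
          rw [hθ, Abelian.Ext.smul_comp, hE, AlgHom.commutes, RingHom.id_apply, Algebra.smul_def]
          rfl }
    have hf : ∀ x, f x = E ((θ x).comp (Abelian.Ext.mk₀ g) (add_zero n)) := fun _ => rfl
    refine ⟨f, ⟨?_, ?_, ?_⟩⟩
    · exact IsLocalizedModule.map_units (Algebra.linearMap B (Localization.AtPrime p))
    · intro y
      obtain ⟨s, hs', e, he⟩ := hs (E.symm y)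
      refine ⟨(θ.symm e, ⟨μ s, hs'⟩), ?_⟩
      change μ s • y = f (θ.symm e)
      rw [hf, θ.apply_symm_apply, ← he, hE, E.apply_symm_apply, Algebra.smul_def]
    · intro a b hab
      have h1 : f (a - b) = 0 := by rw [map_sub, hab, sub_self]
      rw [hf] at h1
      obtain ⟨s, hs', he⟩ := hi _ ((map_eq_zero_iff E E.injective).mp h1)
      refine ⟨⟨μ s, hs'⟩, ?_⟩
      change μ s • a = μ s • b
      rw [hθ', map_eq_zero_iff θ θ.injective, smul_sub, sub_eq_zero] at he
      exact he

theorem rig_hom_equiv {R : Type u} [CommRing R] (S : ShortComplex (ModuleCat.{u} R))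
    (E : Type u) [AddCommGroup E] [Module R E] (c : LinearMap.ker S.g.hom →ₗ[R] E)
    (hc : Function.Surjective c) (hk : ∀ f, c f = 0 ↔ ∃ y : S.X₁, S.f.hom y = f.1) :
    Nonempty (S.homology ≃ₗ[R] E) := by
  have h1 : LinearMap.range S.moduleCatToCycles = LinearMap.ker c := by
    ext f
    rw [LinearMap.mem_ker, hk, LinearMap.mem_range]
    constructor
    · rintro ⟨y, rfl⟩
      exact ⟨y, rfl⟩
    · rintro ⟨y, hy⟩
      exact ⟨y, Subtype.ext hy⟩
  exact ⟨S.moduleCatHomologyIso.toLinearEquiv.trans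
    ((Submodule.quotEquivOfEq _ _ h1).trans (c.quotKerEquivOfSurjective hc))⟩

theorem rig_extMk_zero {R : Type u} [CommRing R] {X Y : ModuleCat.{u} R}
    (P : ProjectiveResolution X) (n : ℕ) (f : P.complex.X n ⟶ Y)
    (hf : P.complex.d (n + 1) n ≫ f = 0) :
    P.extMk f (n + 1) rfl hf = 0 ↔
      ∃ g : P.complex.X ((ComplexShape.up ℕ).prev n) ⟶ Y,
        P.complex.d n ((ComplexShape.up ℕ).prev n) ≫ g = f := by
  cases n with
  | succ n =>
    have : (ComplexShape.up ℕ).prev (n + 1) = n := by simp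
    rw [this]
    exact P.extMk_eq_zero_iff f _ rfl hf n rfl
  | zero =>
    have h0 : P.complex.d 0 ((ComplexShape.up ℕ).prev 0) = 0 := by
      apply P.complex.shape
      simp
    rw [h0]
    have h1 : P.extMk f 1 rfl hf = 0 ↔ f = 0 := by
      constructor
      · intro h
        rw [← P.extEquivCohomologyClass.apply_eq_iff_eq,
          P.extEquivCohomologyClass_extMk, P.extEquivCohomologyClass_zero,
          CochainComplex.HomComplex.CohomologyClass.mk_eq_zero_iff] at h
        rw [CochainComplex.HomComplex.Cocycle.toSingleMk_mem_coboundaries_iff _ _ _ _ _ 1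
          (by simp)] at h
        obtain ⟨g, hg⟩ := h
        have hz : Limits.IsZero (P.cochainComplex.X 1) :=
          CochainComplex.isZero_of_isStrictlyLE _ 0 1 (by simp)
        rw [hz.eq_of_tgt (P.cochainComplex.d _ 1) 0, Limits.zero_comp] at hg
        rw [← cancel_epi (P.cochainComplexXIso _ 0 rfl).hom, ← hg, Limits.comp_zero]
      · rintro rfl
        exact P.extMk_zero _ _
    rw [h1]
    constructor
    · rintro rfl
      exact ⟨0, by simp⟩
    · rintro ⟨g, hg⟩
      rw [← hg, Limits.zero_comp]

theorem rig_extMk_smul {R : Type u} [CommRing R] {X Y : ModuleCat.{u} R}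
    (P : ProjectiveResolution X) (n : ℕ) (r : R) (f : P.complex.X n ⟶ Y)
    (hf : P.complex.d (n + 1) n ≫ f = 0) :
    P.extMk (r • f) (n + 1) rfl (by rw [Linear.comp_smul, hf, smul_zero]) =
      r • P.extMk f (n + 1) rfl hf := by
  rw [Abelian.Ext.smul_eq_comp_mk₀, P.extMk_comp_mk₀]
  congr 1

theorem rig_compare {R : Type u} [CommRing R] (X Y : ModuleCat.{u} R) (n : ℕ) :
    Nonempty ((((Ext R (ModuleCat.{u} R) n).obj (Opposite.op X)).obj Y) ≃ₗ[R]
      Abelian.Ext X Y n) := by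
  let P := ProjectiveResolution.of X
  let K := P.complex.linearYonedaObj R Y
  have hn : (ComplexShape.up ℕ).next n = n + 1 := by simp
  let S := K.sc' ((ComplexShape.up ℕ).prev n) n (n + 1)
  have hS : ∀ f : P.complex.X n ⟶ Y, S.g.hom f = P.complex.d (n + 1) n ≫ f := fun _ => rfl
  let c : LinearMap.ker S.g.hom →ₗ[R] Abelian.Ext X Y n :=
    { toFun := fun f => P.extMk (show P.complex.X n ⟶ Y from f.1) (n + 1) rfl f.2
      map_add' := fun f g => (P.add_extMk _ _ _ _ _ _).symm
      map_smul' := fun r f => by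
        exact rig_extMk_smul P n r f.1 f.2 }
  have hcs : Function.Surjective c := by
    intro e
    obtain ⟨f, hf, rfl⟩ := P.extMk_surjective e (n + 1) rfl
    exact ⟨⟨f, hf⟩, rfl⟩
  obtain ⟨e⟩ := rig_hom_equiv S _ c hcs (fun f => rig_extMk_zero P n f.1 f.2)
  exact ⟨((P.isoExt n Y).trans
    (ShortComplex.homologyMapIso (K.isoSc' _ n (n + 1) rfl hn))).toLinearEquiv.trans e⟩

theorem rig_env_smul (A B : Type u) [CommRing A] [CommRing B] [Algebra A B]
    (N : Type u) [AddCommGroup N] [Module A N] [Module B N] [IsScalarTower A B N]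
    (b b' : B) (x y : N) :
    letI := TensorProduct.envModule A B N
    (b ⊗ₜ[A] b') • (x ⊗ₜ[A] y) = (b • x) ⊗ₜ[A] (b' • y) := by
  rfl

theorem rig_tensor (A B D : Type u) [CommRing A] [CommRing B] [Algebra A B]
    [AddCommGroup D] [Module B D]
    (S : ∀ (φ : Module.Dual B D) x y, φ x • y = φ y • x)
    (ι : Type u) [Fintype ι] (φ : ι → Module.Dual B D) (d : ι → D) (h1 : ∑ j, φ j (d j) = 1)
    (N : Type u) [AddCommGroup N] [Module A N] [Module B N] [IsScalarTower A B N]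
    (pr : N ≃ₗ[B] Module.Dual B D) :
    letI := TensorProduct.envModule A B N
    ∃ (τ : Module.Dual B D →+ Module.Dual B D →+ (N ⊗[A] N))
      (ev : D → D → (N ⊗[A] N) →ₗ[B ⊗[A] B] (B ⊗[A] B)),
    (∀ (b : B) α β, τ (b • α) β = algebraMap B (B ⊗[A] B) b • τ α β) ∧
    (∀ (b : B) α β, τ α (b • β) =
      (Algebra.TensorProduct.includeRight : B →ₐ[A] B ⊗[A] B).toRingHom b • τ α β) ∧
    (∀ x y α β, ev x y (τ α β) = algebraMap B (B ⊗[A] B) (α x) *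
      (Algebra.TensorProduct.includeRight : B →ₐ[A] B ⊗[A] B).toRingHom (β y)) ∧
    (∀ m, m = ∑ j, ∑ k, ev (d j) (d k) m • τ (φ j) (φ k)) := by
  letI := TensorProduct.envModule A B N
  let e1 : D → N →ₗ[A] B := fun x =>
    { toFun := fun α => pr α x
      map_add' := fun α β => by rw [map_add, LinearMap.add_apply]
      map_smul' := fun a α => by
        rw [← algebraMap_smul B a α, RingHom.id_apply, map_smul, LinearMap.smul_apply,
          algebraMap_smul] }
  let ev : D → D → (N ⊗[A] N) →ₗ[B ⊗[A] B] (B ⊗[A] B) := fun x y =>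
    { toFun := TensorProduct.map (e1 x) (e1 y)
      map_add' := map_add _
      map_smul' := fun r m => by
        rw [RingHom.id_apply]
        induction r with
        | zero => rw [zero_smul, zero_smul, map_zero]
        | add r s hr hs => rw [add_smul, add_smul, map_add, hr, hs]
        | tmul b b' =>
          induction m with
          | zero => rw [smul_zero, map_zero, smul_zero]
          | add r s hr hs => rw [smul_add, map_add, map_add, smul_add, hr, hs]
          | tmul α β =>
            rw [rig_env_smul, TensorProduct.map_tmul, TensorProduct.map_tmul, smul_eq_mul,
              Algebra.TensorProduct.tmul_mul_tmul]
            have he : ∀ (x : D) (b : B) (α : N), e1 x (b • α) = b * e1 x α := by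
              intro x b α
              change pr (b • α) x = b * pr α x
              rw [map_smul, LinearMap.smul_apply, smul_eq_mul]
            rw [he, he] }
  let τ : Module.Dual B D →+ Module.Dual B D →+ (N ⊗[A] N) :=
    AddMonoidHom.mk' (fun α => ({ toFun := fun β => pr.symm α ⊗ₜ[A] pr.symm β
                                  map_zero' := by rw [map_zero, TensorProduct.tmul_zero]
                                  map_add' := fun β β' => by
                                    rw [map_add, TensorProduct.tmul_add] } :
        Module.Dual B D →+ (N ⊗[A] N))) (fun α α' => by
        apply AddMonoidHom.ext
        intro β
        change pr.symm (α + α') ⊗ₜ[A] pr.symm β = pr.symm α ⊗ₜ[A] pr.symm β +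
          pr.symm α' ⊗ₜ[A] pr.symm β
        rw [map_add, TensorProduct.add_tmul])
  have hτ : ∀ α β, τ α β = pr.symm α ⊗ₜ[A] pr.symm β := fun _ _ => rfl
  have hev : ∀ x y α β, ev x y (α ⊗ₜ[A] β) = pr α x ⊗ₜ[A] pr β y := fun _ _ _ _ => rfl
  refine ⟨τ, ev, ?_, ?_, ?_, ?_⟩
  · intro b α β
    rw [hτ, hτ, Algebra.TensorProduct.algebraMap_apply, rig_env_smul, one_smul, map_smul]
    rfl
  · intro b α β
    have : (Algebra.TensorProduct.includeRight : B →ₐ[A] B ⊗[A] B).toRingHom b =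
      (1 : B) ⊗ₜ[A] b := rfl
    rw [hτ, hτ, this, rig_env_smul, one_smul, map_smul]
  · intro x y α β
    have : (Algebra.TensorProduct.includeRight : B →ₐ[A] B ⊗[A] B).toRingHom (β y) =
      (1 : B) ⊗ₜ[A] β y := rfl
    rw [hτ, hev, pr.apply_symm_apply, pr.apply_symm_apply, this, Algebra.TensorProduct.algebraMap_apply,
      Algebra.TensorProduct.tmul_mul_tmul, one_mul, mul_one]
    rfl
  · have hexp : ∀ α : N, ∑ j, pr α (d j) • pr.symm (φ j) = α := by
      intro α
      have : ∀ j, pr α (d j) • pr.symm (φ j) = φ j (d j) • α := fun j => by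
        rw [← map_smul, rig_dual_sym S, map_smul, pr.symm_apply_apply]
      simp only [this]
      rw [← Finset.sum_smul, h1, one_smul]
    intro m
    induction m with
    | zero => simp only [map_zero, zero_smul, Finset.sum_const_zero]
    | add a b ha hb =>
      simp only [map_add, add_smul, Finset.sum_add_distrib]
      rw [← ha, ← hb]
    | tmul α β =>
      simp only [hτ, hev, rig_env_smul, ← TensorProduct.tmul_sum, ← TensorProduct.sum_tmul, hexp]

/-- **Existence of rigid modules over smooth maps.**
Let `A` be a commutative noetherian ring and `B` a nonzero, flat, formally smooth
`A`-algebra, essentially of finite type over `A`, with connected spectrum.  Then there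
exist an invertible `B`-module `N̄` and an `n : ℕ` such that
`Ext^i_{B ⊗[A] B}(B, N̄ ⊗[A] N̄) = 0` for all `i ≠ n` and
`Ext^n_{B ⊗[A] B}(B, N̄ ⊗[A] N̄) ≅ N̄` as `B`-modules; that is, `N̄` is (up to shift) a
rigid module over `B` relative to `A`. -/
theorem exists_rigid_module
    {A B : Type u} [CommRing A] [CommRing B] [Algebra A B]
    [IsNoetherianRing A] [Nontrivial B]
    [Algebra.EssFiniteType A B] [Algebra.FormallySmooth A B]
    (hflat : Module.Flat A B)
    (hconn : ConnectedSpace (PrimeSpectrum B)) :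
    ∃ (N : Type u) (_ : AddCommGroup N) (_ : Module B N) (n : ℕ),
      Module.IsInvertible B N ∧
      (letI : Module A N := Module.compHom N (algebraMap A B)
       haveI : IsScalarTower A B N := IsScalarTower.of_algebraMap_smul fun _ _ => rfl
       letI := TensorProduct.envModule A B N
       letI := ((Algebra.TensorProduct.lmul' A (S := B)).toRingHom).toModule
       (∀ i : ℕ, i ≠ n →
         Subsingleton (((Ext (B ⊗[A] B) (ModuleCat.{u} (B ⊗[A] B)) i).obj
           (Opposite.op (ModuleCat.of (B ⊗[A] B) B))).obj
             (ModuleCat.of (B ⊗[A] B) (N ⊗[A] N)))) ∧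
       (letI : Module B (((Ext (B ⊗[A] B) (ModuleCat.{u} (B ⊗[A] B)) n).obj
           (Opposite.op (ModuleCat.of (B ⊗[A] B) B))).obj
             (ModuleCat.of (B ⊗[A] B) (N ⊗[A] N))) :=
          Module.compHom _ (algebraMap B (B ⊗[A] B))
        Nonempty ((((Ext (B ⊗[A] B) (ModuleCat.{u} (B ⊗[A] B)) n).obj
           (Opposite.op (ModuleCat.of (B ⊗[A] B) B))).obj
             (ModuleCat.of (B ⊗[A] B) (N ⊗[A] N))) ≃ₗ[B] N))) := by
  classical
  let R := B ⊗[A] B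
  haveI : IsNoetherianRing B := Algebra.EssFiniteType.isNoetherianRing A B
  haveI : IsNoetherianRing (B ⊗[A] B) := Algebra.EssFiniteType.isNoetherianRing B (B ⊗[A] B)
  let μ : (B ⊗[A] B) →ₐ[B] B := Algebra.TensorProduct.lmul'' A
  letI iRB : Module (B ⊗[A] B) B := ((Algebra.TensorProduct.lmul' A (S := B)).toRingHom).toModule
  have hsm : ∀ (r : B ⊗[A] B) (b : B), r • b = μ r * b := fun _ _ => rfl
  obtain ⟨p0⟩ : Nonempty (PrimeSpectrum B) := inferInstance
  let n := Module.rankAtStalk (Ω[B⁄A]) p0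
  have H : ∀ (p : Ideal B) [p.IsPrime] (q : Ideal (B ⊗[A] B)) [q.IsPrime],
      q = p.comap (μ : (B ⊗[A] B) →+* B) → ∃ x : Fin n → B ⊗[A] B, (∀ i, x i ∈ RingHom.ker μ) ∧
      RingTheory.Sequence.IsWeaklyRegular (Localization.AtPrime q) (List.ofFn x) ∧
      (RingHom.ker μ).map (algebraMap (B ⊗[A] B) (Localization.AtPrime q)) =
      Ideal.span (Set.range (fun i => algebraMap (B ⊗[A] B) (Localization.AtPrime q) (x i))) := by
    intro p hp q hq' hq
    have hr : Module.rankAtStalk (Ω[B⁄A]) ⟨p, hp⟩ = n :=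
      (Module.isLocallyConstant_rankAtStalk (R := B) (M := Ω[B⁄A])).apply_eq_of_preconnectedSpace
        _ _
    rw [← hr]
    exact rig_P3 (A := A) (B := B) ⟨p, hp⟩ q hq
  let D := Abelian.Ext (ModuleCat.of (B ⊗[A] B) B) (ModuleCat.of (B ⊗[A] B) (B ⊗[A] B)) n
  letI iBD : Module B D := Module.compHom D (algebraMap B (B ⊗[A] B))
  let θ : D ≃+ Abelian.Ext (ModuleCat.of (B ⊗[A] B) B) (ModuleCat.of (B ⊗[A] B) (B ⊗[A] B)) n :=
    AddEquiv.refl _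
  have hθ : ∀ (b : B) (d : D), θ (b • d) = algebraMap B (B ⊗[A] B) b • θ d := fun _ _ => rfl
  obtain ⟨hv, hfin, hloc⟩ := rig_D μ hsm H θ hθ
  obtain ⟨S, ι, _, φ, d, h1⟩ := rig_inv_data hloc
  obtain ⟨N, iN1, iN2, ⟨pr⟩⟩ : ∃ (N : Type u) (_ : AddCommGroup N) (_ : Module B N),
      Nonempty (N ≃ₗ[B] Module.Dual B D) :=
    ⟨Module.Dual B D, inferInstance, inferInstance, ⟨LinearEquiv.refl _ _⟩⟩
  obtain ⟨e0⟩ := rig_inv S ι φ d h1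
  refine ⟨N, iN1, iN2, n, ⟨D, inferInstance, iBD,
    ⟨(TensorProduct.congr pr (LinearEquiv.refl B D)).trans e0⟩⟩, ?_⟩
  letI : Module A N := Module.compHom _ (algebraMap A B)
  haveI : IsScalarTower A B N := IsScalarTower.of_algebraMap_smul fun _ _ => rfl
  letI := TensorProduct.envModule A B N
  obtain ⟨τ, ev, hτ1, hτ2, hev, hM⟩ := rig_tensor A B D S ι φ d h1 N pr
  obtain ⟨hvan, G, hG⟩ := rig_main μ hsm
    (Algebra.TensorProduct.includeRight : B →ₐ[A] B ⊗[A] B).toRingHom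
    (fun b => by
      change Algebra.TensorProduct.lmul' A ((1 : B) ⊗ₜ[A] b) = b
      simp) n θ hθ S ι φ d h1 τ hτ1 hτ2 ev hev hM
  refine ⟨?_, ?_⟩
  · intro i hi
    obtain ⟨e⟩ := rig_compare (ModuleCat.of (B ⊗[A] B) B)
      (ModuleCat.of (B ⊗[A] B) (N ⊗[A] N)) i
    haveI := hvan i (hv i hi)
    exact e.toEquiv.subsingleton
  · obtain ⟨e⟩ := rig_compare (ModuleCat.of (B ⊗[A] B) B)
      (ModuleCat.of (B ⊗[A] B) (N ⊗[A] N)) n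
    letI := Module.compHom (((Ext (B ⊗[A] B) (ModuleCat.{u} (B ⊗[A] B)) n).obj
           (Opposite.op (ModuleCat.of (B ⊗[A] B) B))).obj
             (ModuleCat.of (B ⊗[A] B) (N ⊗[A] N)))
             (algebraMap B (B ⊗[A] B))
    refine ⟨LinearEquiv.symm { (pr.toAddEquiv.trans (G.trans e.toAddEquiv.symm)) with
      map_smul' := ?_ }⟩
    intro b ψ
    change e.symm (G (pr (b • ψ))) = algebraMap B (B ⊗[A] B) b • e.symm (G (pr ψ))
    rw [map_smul, hG, map_smul]
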